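/- Let p ≥ 5 be a prime, and let a_{(p−1)/2} ∈ F_p[s,t] be the leading coefficient in X of θ_{s,t}(X) with θ_{s,t}(x^p) = ψ_{p,s,t}(x) mod p. Then a_{(p−1)/2} is squarefree: for any prime divisor Q of a_{(p−1)/2} in K[s,t], Q² does not divide a_{(p−1)/2}. -/

import Mathlib

open WeierstrassCurve Polynomial

/-- The Weierstrass curve `y² = x³ + sx + t` over the polynomial ring `R[s,t]`, where
`s = X 0` and `t = X 1` in `MvPolynomial (Fin 2) R`. -/
noncomputable def Wst (R : Type*) [CommRing R] : WeierstrassCurve (MvPolynomial (Fin 2) R) :=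
  { a₁ := 0, a₂ := 0, a₃ := 0, a₄ := MvPolynomial.X 0, a₆ := MvPolynomial.X 1 }

/-!
Move a point `P` of `y² = f(x)`, `f = x³ + sx + t`, along the invariant vector field. Taking second
logarithmic derivatives in `ψₙ₊₁ψₙ₋₁ = ψₙ²(x(P) - x(nP))`, the addition law gives by induction the
Toda equation `ψₙψₙ'' - ψₙ'² = n²ψₙ₊₁ψₙ₋₁` for the division polynomials. For `n = p` the
`x`-derivative of `ψₚ` is `p G`, and dividing the equation by `p` yields `2fG' + f'G = 0` modulo
`p`. As `f ^ ((p-1)/2)` also solves this equation, comparing coefficients identifies the leading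
coefficient of `θ` with the Hasse invariant `A = [x^(p-1)] f ^ ((p-1)/2)`.

Now `A` is weighted homogeneous, hence an eigenvector of the Euler field `2s ∂/∂s + 3t ∂/∂t`, and it
satisfies a second order Picard–Fuchs equation for the field `9t ∂/∂s - 2s² ∂/∂t`. If `Q²` divides
`A`, both fields preserve `(Q)`, because the multiplicity of `Q` in `A` is less than `p`; the
determinant of the two fields is `-(4s³ + 27t²)`, so `Q` divides the discriminant. But `A` does not
vanish on nodal cubics: at `f = (x - u)²(x + 2u)` its value is `(3u) ^ ((p-1)/2) ≠ 0`.
-/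

/-! ### The Toda equation for division polynomials -/

section Coordinates

variable {F : Type*} [Field F] {W : Affine F}

/-- The `x`-coordinate of a point of an affine Weierstrass curve, with value `0` at infinity. -/
def xCoord : W.Point → F
  | .zero => 0
  | .some x _ _ => x

/-- The `y`-coordinate of a point of an affine Weierstrass curve, with value `0` at infinity. -/
def yCoord : W.Point → F
  | .zero => 0
  | .some _ y _ => y

@[simp]
lemma xCoord_some {x y : F} (h : W.Nonsingular x y) : xCoord (.some x y h) = x := rfl

@[simp]
lemma yCoord_some {x y : F} (h : W.Nonsingular x y) : yCoord (.some x y h) = y := rfl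

lemma xCoord_neg (P : W.Point) : xCoord (-P) = xCoord P := by
  rcases P with _ | _ <;> rfl

lemma xCoord_eq_iff {P Q : W.Point} (hP : P ≠ 0) (hQ : Q ≠ 0) :
    xCoord P = xCoord Q ↔ P = Q ∨ P = -Q := by
  rcases P with _ | ⟨x₁, y₁, h₁⟩
  · exact absurd rfl hP
  rcases Q with _ | ⟨x₂, y₂, h₂⟩
  · exact absurd rfl hQ
  exact Affine.Point.X_eq_iff

lemma exists_eq_some {P : W.Point} (hP : P ≠ 0) : ∃ x y h, P = .some x y h := by
  rcases P with _ | ⟨x, y, h⟩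
  · exact absurd rfl hP
  · exact ⟨x, y, h, rfl⟩

variable [W.IsShortNF]

lemma equation_short {x y : F} (h : W.Equation x y) : y ^ 2 = x ^ 3 + W.a₄ * x + W.a₆ := by
  simpa using (Affine.equation_iff x y).mp h

lemma negY_short (x y : F) : W.negY x y = -y := by simp [Affine.negY]

lemma Ψ₃_eval_short (x : F) :
    W.Ψ₃.eval x = 3 * x ^ 4 + 6 * W.a₄ * x ^ 2 + 12 * W.a₆ * x - W.a₄ ^ 2 := by
  simp only [Ψ₃, eval_add, eval_mul, eval_ofNat, eval_X, eval_pow, eval_C, b₂_of_isShortNF,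
    b₄_of_isShortNF, b₆_of_isShortNF, b₈_of_isShortNF]
  ring

lemma preΨ₄_eval_short {x y l : F} (h : W.Equation x y) (hl : l * (2 * y) = 3 * x ^ 2 + W.a₄) :
    W.preΨ₄.eval x = -(16 * y ^ 3 * (l * (l ^ 2 - 3 * x) + y)) := by
  simp only [preΨ₄, eval_add, eval_mul, eval_ofNat, eval_X, eval_pow, eval_C, b₂_of_isShortNF,
    b₄_of_isShortNF, b₆_of_isShortNF, b₈_of_isShortNF]
  linear_combination (2 * ((l * (2 * y)) ^ 2 + l * (2 * y) * (3 * x ^ 2 + W.a₄) +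
    (3 * x ^ 2 + W.a₄) ^ 2) - 24 * x * y ^ 2) * hl +
    (16 * (y ^ 2 + x ^ 3 + W.a₄ * x + W.a₆) - 24 * x * (3 * x ^ 2 + W.a₄)) * equation_short h

variable [DecidableEq F]

theorem xCoord_sub_sub_xCoord_add {P Q : W.Point} (hP : P ≠ 0) (hQ : Q ≠ 0)
    (hne : xCoord P ≠ xCoord Q) :
    (xCoord (P - Q) - xCoord (P + Q)) * (xCoord P - xCoord Q) ^ 2 = 4 * yCoord P * yCoord Q := by
  obtain ⟨x₁, y₁, h₁, rfl⟩ := exists_eq_some hP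
  obtain ⟨x₂, y₂, h₂, rfl⟩ := exists_eq_some hQ
  simp only [xCoord_some] at hne
  have hne' : x₁ - x₂ ≠ 0 := sub_ne_zero.mpr hne
  rw [sub_eq_add_neg (Affine.Point.some ..), Affine.Point.neg_some, Affine.Point.add_of_X_ne hne,
    Affine.Point.add_of_X_ne hne]
  simp only [xCoord_some, yCoord_some, Affine.slope_of_X_ne hne, Affine.addX, negY_short,
    a₁_of_isShortNF]
  field_simp
  ring

theorem coords_two_nsmul {P : W.Point} (hP : P ≠ 0) (hy : 2 * yCoord P ≠ 0) :
    ∃ l, l * (2 * yCoord P) = 3 * xCoord P ^ 2 + W.a₄ ∧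
      xCoord (2 • P) = l ^ 2 - 2 * xCoord P ∧
      yCoord (2 • P) = -(l * (xCoord (2 • P) - xCoord P) + yCoord P) := by
  obtain ⟨x, y, h, rfl⟩ := exists_eq_some hP
  have hy' : y ≠ W.negY x y := fun e ↦ hy (by
    rw [negY_short] at e
    rw [yCoord_some]
    linear_combination e)
  refine ⟨W.slope x x y y, ?_⟩
  rw [two_nsmul, Affine.Point.add_self_of_Y_ne hy']
  simp only [xCoord_some, yCoord_some, Affine.addY, Affine.negAddY, negY_short, Affine.addX,
    Affine.slope_of_Y_ne rfl hy']
  simp only [yCoord_some] at hy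
  simp only [a₁_of_isShortNF, a₂_of_isShortNF, sub_neg_eq_add, ← two_mul, div_mul_cancel₀ _ hy,
    and_true]
  exact ⟨by ring, by ring⟩

theorem xCoord_sub_mul_sub_eq_doubling {P Q : W.Point} (hP : P ≠ 0) (hQ : Q ≠ 0)
    (hne : xCoord P ≠ xCoord Q) (hy : 2 * yCoord P ≠ 0) :
    (xCoord P - xCoord (P + Q)) * (xCoord (P - Q) - xCoord P) * (xCoord P - xCoord Q) ^ 2 =
      4 * yCoord P ^ 2 * (xCoord Q - xCoord (2 • P)) := by
  obtain ⟨l, hl, h2, -⟩ := coords_two_nsmul hP hy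
  rw [h2]
  obtain ⟨x₁, y₁, h₁, rfl⟩ := exists_eq_some hP
  obtain ⟨x₂, y₂, h₂, rfl⟩ := exists_eq_some hQ
  simp only [xCoord_some] at hne
  have hne' : x₁ - x₂ ≠ 0 := sub_ne_zero.mpr hne
  rw [sub_eq_add_neg (Affine.Point.some ..), Affine.Point.neg_some, Affine.Point.add_of_X_ne hne,
    Affine.Point.add_of_X_ne hne]
  simp only [xCoord_some, yCoord_some, Affine.slope_of_X_ne hne, Affine.addX, negY_short,
    a₁_of_isShortNF, a₂_of_isShortNF, sub_neg_eq_add] at hl ⊢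
  have hm : (y₁ - y₂) / (x₁ - x₂) * (x₁ - x₂) = y₁ - y₂ := div_mul_cancel₀ _ hne'
  have hp : (y₁ + y₂) / (x₁ - x₂) * (x₁ - x₂) = y₁ + y₂ := div_mul_cancel₀ _ hne'
  generalize (y₁ - y₂) / (x₁ - x₂) = m at hm ⊢
  generalize (y₁ + y₂) / (x₁ - x₂) = k at hp ⊢
  have hmk : m * k * (x₁ - x₂) = x₁ ^ 2 + x₁ * x₂ + x₂ ^ 2 + W.a₄ := by
    apply mul_right_cancel₀ hne'
    linear_combination k * (x₁ - x₂) * hm + (y₁ - y₂) * hp + equation_short h₁.1 -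
      equation_short h₂.1
  linear_combination (2 * x₁ + x₂) * (m * (x₁ - x₂) + (y₁ - y₂)) * hm +
    (2 * x₁ + x₂) * (k * (x₁ - x₂) + (y₁ + y₂)) * hp -
    (m * k * (x₁ - x₂) + (x₁ ^ 2 + x₁ * x₂ + x₂ ^ 2 + W.a₄)) * hmk +
    2 * (2 * x₁ + x₂) * (equation_short h₂.1 - equation_short h₁.1) +
    (l * (2 * y₁) + (3 * x₁ ^ 2 + W.a₄)) * hl

end Coordinates

section Velocity

open scoped Differential

variable {F : Type*} [Field F] [Differential F] {W : Affine F}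

/-- The point `P` moves with velocity `c` times the invariant vector field `(2y, 3x² + a₄)`, that
is, `dx/2y = c` along its motion. The point at infinity only has velocity `0`, which makes
velocities additive for the group law. -/
def HasVelocity (c : F) : W.Point → Prop
  | .zero => c = 0
  | .some x y _ => x′ = 2 * c * y ∧ y′ = c * (3 * x ^ 2 + W.a₄)

namespace HasVelocity

variable {c c₁ c₂ x x₁ x₂ y y₁ y₂ : F}

lemma slope_deriv_of_X_eq (ha : (W.a₄)′ = 0) {h : W.Nonsingular x y} (hy : 2 * y ≠ 0)
    (hP : HasVelocity c (.some x y h)) {l : F} (hl : l * (2 * y) = 3 * x ^ 2 + W.a₄) :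
    l′ = c * (6 * x - 2 * l ^ 2) := by
  obtain ⟨hx, hy'⟩ := hP
  have h3 : (3 : F)′ = 0 := mod_cast Derivation.map_natCast Differential.deriv 3
  have h2 : (2 : F)′ = 0 := mod_cast Derivation.map_natCast Differential.deriv 2
  have hd := congrArg (·′) hl
  simp only [Derivation.leibniz, Derivation.leibniz_pow, map_add, smul_eq_mul, hx, hy', ha, h2,
    h3, nsmul_eq_mul] at hd
  push_cast at hd
  apply mul_right_cancel₀ hy
  linear_combination hd + 2 * c * l * hl

variable [W.IsShortNF]

lemma slope_deriv_of_X_ne {h₁ : W.Nonsingular x₁ y₁} {h₂ : W.Nonsingular x₂ y₂}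
    (hP : HasVelocity c₁ (.some x₁ y₁ h₁)) (hQ : HasVelocity c₂ (.some x₂ y₂ h₂)) (hx : x₁ ≠ x₂)
    {l : F} (hl : l * (x₁ - x₂) = y₁ - y₂) :
    l * (y₁ + y₂) = x₁ ^ 2 + x₁ * x₂ + x₂ ^ 2 + W.a₄ ∧
      l′ = c₁ * (2 * x₁ + x₂ - l ^ 2) + c₂ * (x₁ + 2 * x₂ - l ^ 2) := by
  obtain ⟨hx₁, hy₁⟩ := hP
  obtain ⟨hx₂, hy₂⟩ := hQ
  have hne : x₁ - x₂ ≠ 0 := sub_ne_zero.mpr hx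
  have hq : l * (y₁ + y₂) = x₁ ^ 2 + x₁ * x₂ + x₂ ^ 2 + W.a₄ := by
    apply mul_right_cancel₀ hne
    linear_combination (y₁ + y₂) * hl + equation_short h₁.1 - equation_short h₂.1
  refine ⟨hq, mul_right_cancel₀ hne ?_⟩
  have hd := congrArg (·′) hl
  simp only [Derivation.leibniz, map_sub, smul_eq_mul, hx₁, hx₂, hy₁, hy₂] at hd
  linear_combination hd - (c₁ - c₂) * hq + (c₁ + c₂) * l * hl

-- At a nonsingular point, the invariant vector field `(2y, 3x² + a₄)` does not vanish.
theorem unique {P : W.Point} (h₁ : HasVelocity c₁ P) (h₂ : HasVelocity c₂ P) : c₁ = c₂ := by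
  rcases P with _ | ⟨x, y, h⟩
  · exact h₁.trans h₂.symm
  obtain ⟨-, hns⟩ := (Affine.nonsingular_iff x y).mp h
  simp only [a₁_of_isShortNF, a₂_of_isShortNF, a₃_of_isShortNF] at hns
  rcases hns with hx | hy
  · exact mul_right_cancel₀ (b := 3 * x ^ 2 + W.a₄) (by contrapose hx; linear_combination -hx)
      (h₁.2.symm.trans h₂.2)
  · exact mul_right_cancel₀ (b := 2 * y) (by contrapose hy; linear_combination hy)
      (by linear_combination h₂.1 - h₁.1)

lemma neg {P : W.Point} (hP : HasVelocity c P) : HasVelocity (-c) (-P) := by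
  rcases P with _ | ⟨x, y, h⟩
  · exact neg_eq_zero.mpr hP
  · rw [Affine.Point.neg_some]
    refine ⟨?_, ?_⟩
    · linear_combination hP.1 + 2 * c * negY_short (W := W) x y
    · rw [negY_short, map_neg, hP.2, neg_mul]

variable [DecidableEq F]

lemma slope_relations (ha : (W.a₄)′ = 0) {h₁ : W.Nonsingular x₁ y₁} {h₂ : W.Nonsingular x₂ y₂}
    (hP : HasVelocity c₁ (.some x₁ y₁ h₁)) (hQ : HasVelocity c₂ (.some x₂ y₂ h₂))
    (hxy : ¬(x₁ = x₂ ∧ y₁ = W.negY x₂ y₂)) {l : F} (hl : W.slope x₁ x₂ y₁ y₂ = l) :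
    l * (x₁ - x₂) = y₁ - y₂ ∧ l * (y₁ + y₂) = x₁ ^ 2 + x₁ * x₂ + x₂ ^ 2 + W.a₄ ∧
      l′ = c₁ * (2 * x₁ + x₂ - l ^ 2) + c₂ * (x₁ + 2 * x₂ - l ^ 2) := by
  by_cases hx : x₁ = x₂
  · subst hx
    have hy : y₁ ≠ W.negY x₁ y₂ := fun h ↦ hxy ⟨rfl, h⟩
    obtain rfl := Affine.Y_eq_of_Y_ne h₁.1 h₂.1 rfl hy
    obtain rfl := unique hP hQ
    have h2y : 2 * y₁ ≠ 0 := by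
      contrapose hy
      rw [negY_short]
      linear_combination hy
    have hl' : l * (2 * y₁) = 3 * x₁ ^ 2 + W.a₄ := by
      rw [← hl, Affine.slope_of_Y_ne rfl hy, negY_short, sub_neg_eq_add, ← two_mul,
        div_mul_cancel₀ _ h2y]
      simp
    exact ⟨by ring, by linear_combination hl', by
      linear_combination slope_deriv_of_X_eq ha h2y hP hl'⟩
  · have hl' : l * (x₁ - x₂) = y₁ - y₂ := by
      rw [← hl, Affine.slope_of_X_ne hx, div_mul_cancel₀ _ (sub_ne_zero.mpr hx)]
    exact ⟨hl', slope_deriv_of_X_ne hP hQ hx hl'⟩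

theorem add (ha : (W.a₄)′ = 0) {P Q : W.Point} (hP : HasVelocity c₁ P) (hQ : HasVelocity c₂ Q) :
    HasVelocity (c₁ + c₂) (P + Q) := by
  by_cases hPQ : P = -Q
  · obtain rfl := unique hP (hPQ ▸ hQ.neg)
    rw [hPQ, neg_add_cancel, neg_add_cancel]
    rfl
  rcases P with _ | ⟨x₁, y₁, h₁⟩
  · obtain rfl : c₁ = 0 := hP
    rwa [← Affine.Point.zero_def, zero_add, zero_add]
  rcases Q with _ | ⟨x₂, y₂, h₂⟩
  · obtain rfl : c₂ = 0 := hQ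
    rwa [← Affine.Point.zero_def, add_zero, add_zero]
  have hxy : ¬(x₁ = x₂ ∧ y₁ = W.negY x₂ y₂) := by
    rintro ⟨rfl, rfl⟩
    exact hPQ (Affine.Point.neg_some h₂).symm
  obtain ⟨hl, hq, hd⟩ := slope_relations ha hP hQ hxy rfl
  obtain ⟨hx₁, hy₁⟩ := hP
  rw [Affine.Point.add_some hxy]
  simp only [HasVelocity, Affine.addY, Affine.negAddY, Affine.addX, negY_short,
    a₁_of_isShortNF, a₂_of_isShortNF]
  generalize W.slope x₁ x₂ y₁ y₂ = l at hl hq hd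
  simp only [map_add, map_sub, map_neg, Derivation.leibniz, Derivation.leibniz_pow, smul_eq_mul,
    zero_mul, add_zero, sub_zero, nsmul_eq_mul, hx₁, hQ.1, hy₁, hd]
  push_cast
  constructor
  · linear_combination -2 * c₂ * hl
  · linear_combination (2 * c₁ + c₂) * hq + (c₂ - 2 * c₁) * l * hl

theorem nsmul (ha : (W.a₄)′ = 0) {P : W.Point} (hP : HasVelocity c P) (n : ℕ) :
    HasVelocity (n * c) (n • P) := by
  induction n with
  | zero => simp [HasVelocity, Affine.Point.zero_def]
  | succ n ih => simpa [add_mul, add_nsmul] using ih.add ha hP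

theorem not_isOfFinAddOrder [CharZero F] (ha : (W.a₄)′ = 0) {P : W.Point} (hP : HasVelocity 1 P) :
    ¬IsOfFinAddOrder P := by
  rw [isOfFinAddOrder_iff_nsmul_eq_zero]
  rintro ⟨n, hn, h⟩
  have h₀ : HasVelocity (0 : F) (n • P) := h ▸ rfl
  exact hn.ne' (by simpa using unique (hP.nsmul ha n) h₀)

end HasVelocity
end Velocity

section DivisionPolynomialRelation

variable {F : Type*} [Field F] {W : Affine F}

/-- The value at `P` of the `n`-th division polynomial `ψₙ` of a short Weierstrass curve,
for which `ψ₂ = 2y`. -/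
noncomputable def divisionValue (P : W.Point) (n : ℤ) : F :=
  normEDS (2 * yCoord P) (W.Ψ₃.eval (xCoord P)) (W.preΨ₄.eval (xCoord P)) n

variable [DecidableEq F] {P : W.Point}

lemma zsmul_ne_zero_of_not_isOfFinAddOrder (hP : ¬IsOfFinAddOrder P) {n : ℤ} (hn : n ≠ 0) :
    n • P ≠ 0 :=
  fun h ↦ hP (isOfFinAddOrder_iff_zsmul_eq_zero.mpr ⟨n, hn, h⟩)

lemma xCoord_zsmul_ne (hP : ¬IsOfFinAddOrder P) {m n : ℤ} (hn : 0 < n) (hnm : n < m) :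
    xCoord (m • P) ≠ xCoord (n • P) := by
  have hinj := injective_zsmul_iff_not_isOfFinAddOrder.mpr hP
  rw [Ne, xCoord_eq_iff (zsmul_ne_zero_of_not_isOfFinAddOrder hP (hn.trans hnm).ne')
    (zsmul_ne_zero_of_not_isOfFinAddOrder hP hn.ne'), ← neg_zsmul, hinj.eq_iff, hinj.eq_iff]
  omega

/-- The relation `ψₙ₊₁ψₙ₋₁ = ψₙ²(x - x(nP))` at the point `P`. -/
def XFormula (P : W.Point) (n : ℤ) : Prop :=
  divisionValue P (n + 1) * divisionValue P (n - 1) =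
    divisionValue P n ^ 2 * (xCoord P - xCoord (n • P))

namespace XFormula

lemma one (P : W.Point) : XFormula P 1 := by
  simp [XFormula, divisionValue]

lemma mul_eq {l m n : ℤ} (h : XFormula P m) (hn : n = m + 1) (hl : l = m - 1) :
    divisionValue P n * divisionValue P l =
      divisionValue P m ^ 2 * (xCoord P - xCoord (m • P)) := by
  rwa [hn, hl]

lemma divisionValue_odd {k m n : ℤ} (hm : XFormula P m) (hn : XFormula P n) (hmn : n = m + 1)
    (hk : k = 2 * m + 1) : divisionValue P k =
      divisionValue P m ^ 2 * divisionValue P n ^ 2 * (xCoord (m • P) - xCoord (n • P)) := by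
  subst hk hmn
  have h₀ := hm.mul_eq rfl rfl
  have h₁ := hn.mul_eq (n := m + 2) (l := m) (by ring) (by ring)
  unfold divisionValue at *
  rw [normEDS_odd]
  linear_combination normEDS _ _ _ m ^ 2 * h₁ - normEDS _ _ _ (m + 1) ^ 2 * h₀

lemma divisionValue_even {k l m n : ℤ} (hl : XFormula P l) (hn : XFormula P n) (hlm : l = m - 1)
    (hmn : n = m + 1) (hk : k = 2 * m) : divisionValue P k * (2 * yCoord P) =
      divisionValue P l ^ 2 * divisionValue P n ^ 2 * (xCoord (l • P) - xCoord (n • P)) := by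
  subst hk hlm hmn
  have h₀ := hl.mul_eq (n := m) (l := m - 2) (by ring) (by ring)
  have h₁ := hn.mul_eq (n := m + 2) (l := m) (by ring) (by ring)
  unfold divisionValue at *
  rw [normEDS_even]
  linear_combination normEDS _ _ _ (m - 1) ^ 2 * h₁ - normEDS _ _ _ (m + 1) ^ 2 * h₀

end XFormula

variable [W.IsShortNF]

lemma two_mul_yCoord_ne_zero (hP : 2 • P ≠ 0) : 2 * yCoord P ≠ 0 := by
  contrapose hP
  rcases P with _ | ⟨x, y, h⟩
  · rfl
  · rw [yCoord_some] at hP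
    rw [two_nsmul, Affine.Point.add_self_of_Y_eq]
    rw [negY_short]
    linear_combination hP

lemma two_mul_yCoord_zsmul_ne_zero (hP : ¬IsOfFinAddOrder P) {n : ℤ} (hn : n ≠ 0) :
    2 * yCoord (n • P) ≠ 0 := by
  refine two_mul_yCoord_ne_zero ?_
  rw [← natCast_zsmul, smul_smul]
  exact zsmul_ne_zero_of_not_isOfFinAddOrder hP (mul_ne_zero two_ne_zero hn)

lemma xCoord_zsmul_sub_sub_add (hP : ¬IsOfFinAddOrder P) {m n : ℤ} (hn : 0 < n) (hnm : n < m) :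
    (xCoord ((m - n) • P) - xCoord ((m + n) • P)) * (xCoord (m • P) - xCoord (n • P)) ^ 2 =
      4 * yCoord (m • P) * yCoord (n • P) := by
  rw [sub_zsmul, add_zsmul]
  exact xCoord_sub_sub_xCoord_add (zsmul_ne_zero_of_not_isOfFinAddOrder hP (hn.trans hnm).ne')
    (zsmul_ne_zero_of_not_isOfFinAddOrder hP hn.ne') (xCoord_zsmul_ne hP hn hnm)

lemma xCoord_zsmul_doubling (hP : ¬IsOfFinAddOrder P) {m : ℤ} (hm : 1 < m) :
    (xCoord (m • P) - xCoord ((m + 1) • P)) * (xCoord ((m - 1) • P) - xCoord (m • P)) *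
      (xCoord (m • P) - xCoord P) ^ 2 =
    4 * yCoord (m • P) ^ 2 * (xCoord P - xCoord ((2 * m) • P)) := by
  have hm₀ : m ≠ 0 := by omega
  have hne : xCoord (m • P) ≠ xCoord P := by simpa using xCoord_zsmul_ne hP one_pos hm
  have hP₀ : P ≠ 0 := by simpa using zsmul_ne_zero_of_not_isOfFinAddOrder hP one_ne_zero
  rw [add_one_zsmul, sub_one_zsmul, ← sub_eq_add_neg, two_mul m, add_zsmul, ← two_nsmul]
  exact xCoord_sub_mul_sub_eq_doubling (zsmul_ne_zero_of_not_isOfFinAddOrder hP hm₀) hP₀ hne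
    (two_mul_yCoord_zsmul_ne_zero hP hm₀)

namespace XFormula

theorem two_mul (hP : ¬IsOfFinAddOrder P) {m : ℤ} (hm : 1 < m)
    (h₀ : XFormula P (m - 1)) (h₁ : XFormula P m) (h₂ : XFormula P (m + 1)) :
    XFormula P (2 * m) := by
  have hb : 2 * yCoord P ≠ 0 := by simpa using two_mul_yCoord_zsmul_ne_zero hP one_ne_zero
  have hdiff := xCoord_zsmul_sub_sub_add hP one_pos hm
  have hdbl := xCoord_zsmul_doubling hP hm
  rw [one_zsmul] at hdiff
  have e₀ : divisionValue P (2 * m - 1) = _ := divisionValue_odd h₀ h₁ (by ring) (by ring)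
  have e₁ := divisionValue_even h₀ h₂ rfl rfl rfl
  have e₂ := divisionValue_odd h₁ h₂ rfl rfl
  unfold XFormula at h₁ ⊢
  rw [e₀, e₂]
  apply mul_right_cancel₀ (pow_ne_zero 2 hb)
  generalize divisionValue P (m - 1) = w₀, divisionValue P m = w₁, divisionValue P (m + 1) = w₂,
    divisionValue P (2 * m) = w, xCoord ((m - 1) • P) = X₀, xCoord (m • P) = X₁,
    xCoord ((m + 1) • P) = X₂, xCoord ((2 * m) • P) = Z at *
  have hsq : (w₂ * w₀) ^ 2 = (w₁ ^ 2 * (xCoord P - X₁)) ^ 2 := by rw [h₁]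
  have hw : (w * (2 * yCoord P)) ^ 2 = w₁ ^ 8 * (4 * yCoord (m • P) * yCoord P) ^ 2 := by
    rw [e₁, ← hdiff]
    linear_combination (X₀ - X₂) ^ 2 * ((w₂ * w₀) ^ 2 + (w₁ ^ 2 * (xCoord P - X₁)) ^ 2) * hsq
  linear_combination w₁ ^ 4 * (X₀ - X₁) * (X₁ - X₂) * (2 * yCoord P) ^ 2 * hsq +
    w₁ ^ 8 * (2 * yCoord P) ^ 2 * hdbl - (xCoord P - Z) * hw

theorem two_mul_add_one (hP : ¬IsOfFinAddOrder P) {m : ℤ} (hm : 1 < m)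
    (h₀ : XFormula P (m - 1)) (h₁ : XFormula P m) (h₂ : XFormula P (m + 1))
    (h₃ : XFormula P (m + 2)) :
    XFormula P (2 * m + 1) := by
  have hb : 2 * yCoord P ≠ 0 := by simpa using two_mul_yCoord_zsmul_ne_zero hP one_ne_zero
  have hdiff₁ := xCoord_zsmul_sub_sub_add hP one_pos hm
  have hdiff₂ := xCoord_zsmul_sub_sub_add hP one_pos (hm.trans (lt_add_one m))
  have hdiff := xCoord_zsmul_sub_sub_add hP (one_pos.trans hm) (lt_add_one m)
  rw [one_zsmul] at hdiff₁
  rw [add_sub_cancel_right, add_assoc, one_add_one_eq_two, one_zsmul] at hdiff₂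
  rw [show m + 1 + m = 2 * m + 1 by ring, add_sub_cancel_left, one_zsmul] at hdiff
  have e₀ := divisionValue_even h₀ h₂ rfl rfl rfl
  have e₁ := divisionValue_odd h₁ h₂ rfl rfl
  have e₂ : divisionValue P (2 * m + 1 + 1) * _ = _ :=
    divisionValue_even h₁ h₃ (by ring) (by ring) (m := m + 1) (by ring)
  replace h₁ := h₁.mul_eq rfl rfl
  replace h₂ := h₂.mul_eq (n := m + 2) (l := m) (by ring) (by ring)
  rw [XFormula, add_sub_cancel_right, e₁]
  apply mul_right_cancel₀ (pow_ne_zero 2 hb)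
  generalize divisionValue P (m - 1) = w₀, divisionValue P m = w₁, divisionValue P (m + 1) = w₂,
    divisionValue P (m + 2) = w₃, xCoord ((m - 1) • P) = X₀, xCoord (m • P) = X₁,
    xCoord ((m + 1) • P) = X₂, xCoord ((m + 2) • P) = X₃, xCoord ((2 * m + 1) • P) = Z at *
  have hsq₁ : (w₂ * w₀) ^ 2 = (w₁ ^ 2 * (xCoord P - X₁)) ^ 2 := by rw [h₁]
  have hsq₂ : (w₃ * w₁) ^ 2 = (w₂ ^ 2 * (xCoord P - X₂)) ^ 2 := by rw [h₂]
  calc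
    _ = (w₃ * w₁) ^ 2 * (X₁ - X₃) * ((w₂ * w₀) ^ 2 * (X₀ - X₂)) := by
      linear_combination (divisionValue P (2 * m) * (2 * yCoord P)) * e₂ +
        (w₃ * w₁) ^ 2 * (X₁ - X₃) * e₀
    _ = w₁ ^ 4 * w₂ ^ 4 * ((X₁ - X₃) * (X₂ - xCoord P) ^ 2) *
        ((X₀ - X₂) * (X₁ - xCoord P) ^ 2) := by
      rw [hsq₁, hsq₂]
      ring
    _ = _ := by
      rw [hdiff₁, hdiff₂]
      linear_combination -4 * w₁ ^ 4 * w₂ ^ 4 * yCoord P ^ 2 * hdiff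

lemma two (hP : ¬IsOfFinAddOrder P) : XFormula P 2 := by
  have hP₀ : P ≠ 0 := by simpa using zsmul_ne_zero_of_not_isOfFinAddOrder hP one_ne_zero
  have hy : 2 * yCoord P ≠ 0 := by simpa using two_mul_yCoord_zsmul_ne_zero hP one_ne_zero
  obtain ⟨l, hl, hx, -⟩ := coords_two_nsmul hP₀ hy
  suffices hΨ : W.Ψ₃.eval (xCoord P) = (2 * yCoord P) ^ 2 * (xCoord P - xCoord (2 • P)) by
    simpa [XFormula, divisionValue, two_zsmul, ← two_nsmul] using hΨ
  obtain ⟨x, y, h, rfl⟩ := exists_eq_some hP₀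
  rw [hx, Ψ₃_eval_short]
  simp only [xCoord_some, yCoord_some] at hl ⊢
  linear_combination -12 * x * equation_short h.1 + (2 * l * y + 3 * x ^ 2 + W.a₄) * hl

lemma three (hP : ¬IsOfFinAddOrder P) : XFormula P 3 := by
  have hP₀ : P ≠ 0 := by simpa using zsmul_ne_zero_of_not_isOfFinAddOrder hP one_ne_zero
  have hy : 2 * yCoord P ≠ 0 := by simpa using two_mul_yCoord_zsmul_ne_zero hP one_ne_zero
  obtain ⟨l, hl, hx, hY⟩ := coords_two_nsmul hP₀ hy
  have hd : W.preΨ₄.eval (xCoord P) = 16 * yCoord P ^ 3 * yCoord (2 • P) := by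
    obtain ⟨x, y, h, rfl⟩ := exists_eq_some hP₀
    rw [hY, hx]
    simp only [xCoord_some, yCoord_some] at hl ⊢
    rw [preΨ₄_eval_short h.1 hl]
    ring
  have hdiff : (xCoord P - xCoord ((3 : ℤ) • P)) * (xCoord (2 • P) - xCoord P) ^ 2 =
      4 * yCoord (2 • P) * yCoord P := by
    simpa [two_zsmul, ← two_nsmul] using xCoord_zsmul_sub_sub_add hP one_pos one_lt_two
  have hΨ : W.Ψ₃.eval (xCoord P) = (2 * yCoord P) ^ 2 * (xCoord P - xCoord (2 • P)) := by
    simpa [XFormula, divisionValue, two_zsmul, ← two_nsmul] using two hP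
  suffices h : W.preΨ₄.eval (xCoord P) * (2 * yCoord P) * (2 * yCoord P) =
      W.Ψ₃.eval (xCoord P) ^ 2 * (xCoord P - xCoord ((3 : ℤ) • P)) by
    simpa [XFormula, divisionValue] using h
  rw [hΨ, hd]
  linear_combination -16 * yCoord P ^ 4 * hdiff

theorem of_not_isOfFinAddOrder (hP : ¬IsOfFinAddOrder P) {n : ℕ} (hn : n ≠ 0) :
    XFormula P n := by
  induction n using Nat.strong_induction_on with | _ n ih
  obtain ⟨m, rfl | rfl⟩ := n.even_or_odd'
  · obtain rfl | hm := (show 1 ≤ m by omega).eq_or_lt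
    · exact two hP
    · have ih₀ := ih (m - 1) (by omega) (by omega)
      rw [Nat.cast_pred (by omega)] at ih₀
      exact_mod_cast two_mul hP (mod_cast hm) ih₀ (ih m (by omega) (by omega))
        (mod_cast ih (m + 1) (by omega) (by omega))
  · obtain rfl | rfl | hm : m = 0 ∨ m = 1 ∨ 1 < m := by omega
    · exact one P
    · exact three hP
    · have ih₀ := ih (m - 1) (by omega) (by omega)
      rw [Nat.cast_pred (by omega)] at ih₀
      exact_mod_cast two_mul_add_one hP (mod_cast hm) ih₀ (ih m (by omega) (by omega))
        (mod_cast ih (m + 1) (by omega) (by omega)) (mod_cast ih (m + 2) (by omega) (by omega))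

end XFormula

theorem divisionValue_ne_zero (hP : ¬IsOfFinAddOrder P) {n : ℕ} (hn : n ≠ 0) :
    divisionValue P n ≠ 0 := by
  have hy : 2 * yCoord P ≠ 0 := by simpa using two_mul_yCoord_zsmul_ne_zero hP one_ne_zero
  induction n using Nat.strong_induction_on with | _ n ih
  obtain rfl | rfl | ⟨m, rfl, hm⟩ : n = 1 ∨ n = 2 ∨ ∃ m, n = m + 1 ∧ 1 < m := by
    rcases n with _ | _ | _ | n <;> simp_all
  · simp [divisionValue]
  · simpa [divisionValue] using hy
  have hx : xCoord P ≠ xCoord ((m : ℤ) • P) := by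
    simpa using (xCoord_zsmul_ne hP one_pos (Nat.one_lt_cast.mpr hm)).symm
  have h := XFormula.of_not_isOfFinAddOrder hP (n := m) (by omega)
  refine left_ne_zero_of_mul (b := divisionValue P (m - 1)) ?_
  rw [Nat.cast_succ, h]
  exact mul_ne_zero (pow_ne_zero 2 (ih m (by omega) (by omega))) (sub_ne_zero.mpr hx)

end DivisionPolynomialRelation

section Toda

open scoped Differential

variable {F : Type*} [Field F] [Differential F]

lemma logDeriv_deriv_mul_sq (a : F) : (Differential.logDeriv a)′ * a ^ 2 = a * a′′ - a′ ^ 2 := by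
  obtain rfl | ha := eq_or_ne a 0
  · simp
  · rw [Differential.logDeriv, Derivation.leibniz_div]
    simp only [smul_eq_mul]
    field_simp

variable {W : Affine F} [W.IsShortNF] {c₁ c₂ : F} {P Q : W.Point}

theorem logDeriv_xCoord_sub_deriv [DecidableEq F] (hc₁ : c₁′ = 0) (hc₂ : c₂′ = 0)
    (hP : HasVelocity c₁ P) (hQ : HasVelocity c₂ Q) (hP₀ : P ≠ 0) (hQ₀ : Q ≠ 0)
    (hne : xCoord P ≠ xCoord Q) :
    (Differential.logDeriv (xCoord P - xCoord Q))′ = 2 * c₁ ^ 2 * xCoord P + 2 * c₂ ^ 2 * xCoord Q -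
      (c₁ + c₂) ^ 2 * xCoord (P + Q) - (c₁ - c₂) ^ 2 * xCoord (P - Q) := by
  obtain ⟨x₁, y₁, h₁, rfl⟩ := exists_eq_some hP₀
  obtain ⟨x₂, y₂, h₂, rfl⟩ := exists_eq_some hQ₀
  simp only [xCoord_some] at hne
  have hne' : x₁ - x₂ ≠ 0 := sub_ne_zero.mpr hne
  have h2 : (2 : F)′ = 0 := mod_cast Derivation.map_natCast Differential.deriv 2
  apply mul_right_cancel₀ (pow_ne_zero 2 hne')
  rw [sub_eq_add_neg (Affine.Point.some ..), Affine.Point.neg_some, Affine.Point.add_of_X_ne hne,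
    Affine.Point.add_of_X_ne hne]
  simp only [xCoord_some, Affine.slope_of_X_ne hne, Affine.addX, negY_short, a₁_of_isShortNF,
    a₂_of_isShortNF, sub_neg_eq_add, logDeriv_deriv_mul_sq, map_sub, hP.1, hQ.1, hP.2, hQ.2,
    Derivation.leibniz, smul_eq_mul, h2, hc₁, hc₂]
  have hm : (y₁ - y₂) / (x₁ - x₂) * (x₁ - x₂) = y₁ - y₂ := div_mul_cancel₀ _ hne'
  have hp : (y₁ + y₂) / (x₁ - x₂) * (x₁ - x₂) = y₁ + y₂ := div_mul_cancel₀ _ hne'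
  generalize (y₁ - y₂) / (x₁ - x₂) = m at hm ⊢
  generalize (y₁ + y₂) / (x₁ - x₂) = k at hp ⊢
  linear_combination (c₁ + c₂) ^ 2 * (m * (x₁ - x₂) + (y₁ - y₂)) * hm +
    (c₁ - c₂) ^ 2 * (k * (x₁ - x₂) + (y₁ + y₂)) * hp -
    2 * (c₁ ^ 2 - c₂ ^ 2) * (equation_short h₁.1 - equation_short h₂.1)

lemma logDeriv_two_mul_yCoord_deriv [DecidableEq F] (ha : (W.a₄)′ = 0) (hP : HasVelocity 1 P)
    (hP₀ : P ≠ 0) (hy : 2 * yCoord P ≠ 0) :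
    (Differential.logDeriv (2 * yCoord P))′ = 4 * (xCoord P - xCoord (2 • P)) := by
  obtain ⟨l, hl, hx, -⟩ := coords_two_nsmul hP₀ hy
  rw [hx]
  obtain ⟨x, y, h, rfl⟩ := exists_eq_some hP₀
  have h2 : (2 : F)′ = 0 := mod_cast Derivation.map_natCast Differential.deriv 2
  have h3 : (3 : F)′ = 0 := mod_cast Derivation.map_natCast Differential.deriv 3
  apply mul_right_cancel₀ (pow_ne_zero 2 hy)
  simp only [logDeriv_deriv_mul_sq, xCoord_some, yCoord_some, Derivation.leibniz,
    Derivation.leibniz_pow, map_add, smul_eq_mul, nsmul_eq_mul, hP.1, hP.2, h2, h3, ha] at hl ⊢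
  simp only [Nat.cast_ofNat, one_mul, mul_one, mul_zero, add_zero,
    map_zero, Derivation.map_one_eq_zero]
  linear_combination 4 * (l * (2 * y) + (3 * x ^ 2 + W.a₄)) * hl

theorem logDeriv_divisionValue_deriv [DecidableEq F] [CharZero F] (ha : (W.a₄)′ = 0)
    (hP : HasVelocity 1 P) {n : ℕ} (hn : n ≠ 0) :
    (Differential.logDeriv (divisionValue P n))′ = n ^ 2 * (xCoord P - xCoord (n • P)) := by
  have hord := hP.not_isOfFinAddOrder ha
  have hP₀ : P ≠ 0 := by simpa using zsmul_ne_zero_of_not_isOfFinAddOrder hord one_ne_zero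
  induction n using Nat.strong_induction_on with | _ n ih
  obtain rfl | rfl | ⟨k, rfl, hk⟩ : n = 1 ∨ n = 2 ∨ ∃ k, n = k + 1 + 1 ∧ k ≠ 0 := by
    rcases n with _ | _ | _ | n <;> simp_all
  · simp [divisionValue]
  · rw [divisionValue, Nat.cast_two, normEDS_two, logDeriv_two_mul_yCoord_deriv ha hP hP₀
      (by simpa using two_mul_yCoord_zsmul_ne_zero hord one_ne_zero)]
    norm_num
  have hne : xCoord P - xCoord ((k + 1) • P) ≠ 0 := sub_ne_zero.mpr <| Ne.symm <| by
    simpa only [natCast_zsmul, one_zsmul] using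
      xCoord_zsmul_ne hord one_pos (m := (k + 1 : ℕ)) (by omega)
  have hkP : (k + 1) • P ≠ 0 :=
    mod_cast zsmul_ne_zero_of_not_isOfFinAddOrder hord (n := (k + 1 : ℕ)) (by omega)
  have hW {j : ℕ} (hj : j ≠ 0) := divisionValue_ne_zero hord hj
  have hrel := (XFormula.of_not_isOfFinAddOrder hord k.succ_ne_zero).mul_eq
    (n := (k + 1 + 1 : ℕ)) (l := k) (by simp) (by simp)
  have hlog := congrArg (fun a ↦ (Differential.logDeriv a)′) hrel
  have hsub := logDeriv_xCoord_sub_deriv (by simp) (by simp) hP (hP.nsmul ha (k + 1)) hP₀ hkP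
    (sub_ne_zero.mp hne)
  rw [← xCoord_neg (P - (k + 1) • P), neg_sub, ← succ_nsmul', succ_nsmul P k,
    add_sub_cancel_right, ← succ_nsmul] at hsub
  simp only [Differential.logDeriv_mul _ _ (hW (k + 1).succ_ne_zero) (hW hk), natCast_zsmul,
    Differential.logDeriv_mul _ _ (pow_ne_zero 2 (hW k.succ_ne_zero)) hne,
    Differential.logDeriv_pow, map_add, Derivation.leibniz, Derivation.map_natCast, smul_eq_mul,
    hsub, ih k (by omega) hk, ih (k + 1) (by omega) k.succ_ne_zero] at hlog
  push_cast at hlog ⊢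
  linear_combination hlog

theorem divisionValue_toda [CharZero F] (ha : (W.a₄)′ = 0) (hP : HasVelocity 1 P) {n : ℕ}
    (hn : n ≠ 0) :
    divisionValue P n * (divisionValue P n)′′ - (divisionValue P n)′ ^ 2 =
      n ^ 2 * (divisionValue P (n + 1) * divisionValue P (n - 1)) := by
  classical
  have hrel := XFormula.of_not_isOfFinAddOrder (hP.not_isOfFinAddOrder ha) hn
  rw [← logDeriv_deriv_mul_sq, logDeriv_divisionValue_deriv ha hP hn, hrel, natCast_zsmul]
  ring

end Toda

section CoefficientwiseDerivation

variable {A R : Type*} [CommRing A] [CommRing R] [Algebra A R]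

/-- The derivation of `R[X]` applying `D` to each coefficient. -/
noncomputable def coeffDerivation (D : Derivation A R R) : Derivation A R[X] R[X] :=
  PolynomialModule.equivPolynomialSelf.compDer D.mapCoeffs

variable (D : Derivation A R R)

lemma coeff_coeffDerivation (f : R[X]) (i : ℕ) : (coeffDerivation D f).coeff i = D (f.coeff i) :=
  rfl

lemma coeffDerivation_C (a : R) : coeffDerivation D (C a) = C (D a) := by
  simp [coeffDerivation]

lemma coeffDerivation_X : coeffDerivation D X = 0 := by
  simp [coeffDerivation]

end CoefficientwiseDerivation

section GenericPoint

open scoped Polynomial.Bivariate Differential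

theorem exists_derivation_extension {R S : Type*} (T : Type*) [CommRing R] [CommRing S]
    [CommRing T] [Algebra R S] [Algebra R T] [Algebra S T] [IsScalarTower R S T]
    [Algebra.FormallyEtale S T] (d : Derivation R S T) :
    ∃ D : Derivation R T T, ∀ s, D (algebraMap S T s) = d s := by
  let e := KaehlerDifferential.tensorKaehlerEquivOfFormallyEtale R S T
  refine ⟨(d.liftKaehlerDifferential.liftBaseChange T ∘ₗ e.symm.toLinearMap).compDer
    (KaehlerDifferential.D R T), fun s ↦ ?_⟩
  simp [e, KaehlerDifferential.tensorKaehlerEquivOfFormallyEtale_symm_D_algebraMap]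

variable {R : Type*} [CommRing R] (W : Affine R)

/-- The Hamiltonian vector field of the Weierstrass polynomial `f`, sending `g` to
`(∂f/∂Y) (∂g/∂X) - (∂f/∂X) (∂g/∂Y)`. It kills `f`, and so induces the invariant derivation of the
coordinate ring. -/
noncomputable def hamiltonianDerivation : Derivation R R[X][Y] R[X][Y] :=
  W.polynomialY • coeffDerivation derivative' -
    W.polynomialX • derivative'.restrictScalars R

lemma hamiltonianDerivation_X : hamiltonianDerivation W X = -W.polynomialX := by
  simp [hamiltonianDerivation, coeffDerivation_X]

lemma hamiltonianDerivation_C (g : R[X]) :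
    hamiltonianDerivation W (C g) = W.polynomialY * C (derivative g) := by
  simp [hamiltonianDerivation, coeffDerivation_C]

lemma hamiltonianDerivation_polynomial : hamiltonianDerivation W W.polynomial = 0 := by
  simp only [Affine.polynomial, Affine.polynomialX, Affine.polynomialY, hamiltonianDerivation_C,
    hamiltonianDerivation_X, map_sub, map_add, map_mul, map_pow, map_ofNat C, derivative_X,
    derivative_C, Derivation.leibniz, Derivation.leibniz_pow,
    smul_eq_mul, nsmul_eq_mul, Nat.cast_ofNat, map_zero, map_one]
  ring

theorem exists_derivation_coordinateRing :
    ∃ D : Derivation R W.CoordinateRing W.CoordinateRing, ∀ g,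
      D (Affine.CoordinateRing.mk W g) =
        Affine.CoordinateRing.mk W (hamiltonianDerivation W g) := by
  let π : R[X][Y] →ₐ[R] W.CoordinateRing := (AdjoinRoot.mkₐ W.polynomial).restrictScalars R
  refine ⟨Derivation.liftOfSurjective (f := π) AdjoinRoot.mk_surjective
    (d := hamiltonianDerivation W) fun g hg ↦ ?_,
    Derivation.liftOfSurjective_apply (f := π) AdjoinRoot.mk_surjective _⟩
  obtain ⟨q, rfl⟩ := AdjoinRoot.mk_eq_zero.mp hg
  refine AdjoinRoot.mk_eq_zero.mpr ?_
  rw [Derivation.leibniz, hamiltonianDerivation_polynomial, smul_zero, add_zero]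
  exact dvd_mul_right _ _

lemma equation_map_of_polynomial_eq_zero {S : Type*} [CommRing S] {π : R[X][Y] →+* S} {f : R →+* S}
    (hf : ∀ a, π (C (C a)) = f a) (hπ : π W.polynomial = 0) :
    (W.map f).toAffine.Equation (π (C X)) (π Y) := by
  rw [Affine.equation_iff', ← hπ]
  simp only [Affine.polynomial, map_add, map_sub, map_mul, map_pow, hf, map_a₁, map_a₂, map_a₃,
    map_a₄, map_a₆]
  ring

instance map_isShortNF [W.IsShortNF] {S : Type*} [CommRing S] (f : R →+* S) :
    (W.map f).IsShortNF where
  a₁ := by simp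
  a₂ := by simp
  a₃ := by simp

lemma transcendental_algebraMap_X [IsDomain R] (F : Type*) [Field F] [Algebra R F]
    [Algebra W.CoordinateRing F] [IsScalarTower R W.CoordinateRing F]
    [IsFractionRing W.CoordinateRing F] :
    Transcendental R (algebraMap W.CoordinateRing F (algebraMap R[X] _ X)) := by
  rw [transcendental_algebraMap_iff (IsFractionRing.injective W.CoordinateRing F),
    transcendental_algebraMap_iff (FaithfulSMul.algebraMap_injective R[X] W.CoordinateRing)]
  exact transcendental_X R

theorem exists_generic_point [W.IsShortNF] [IsDomain R] [CharZero R] (F : Type*) [Field F]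
    [Algebra R F] [Algebra W.CoordinateRing F] [IsScalarTower R W.CoordinateRing F]
    [IsFractionRing W.CoordinateRing F] :
    ∃ (_ : Differential F) (P : (W.map (algebraMap R F)).toAffine.Point),
      (∀ a : R, (algebraMap R F a)′ = 0) ∧ HasVelocity 1 P ∧ Transcendental R (xCoord P) := by
  obtain ⟨d, hd⟩ := exists_derivation_coordinateRing W
  have : Algebra.FormallyEtale W.CoordinateRing F :=
    .of_isLocalization (nonZeroDivisors W.CoordinateRing)
  obtain ⟨D, hD⟩ := exists_derivation_extension F
    ((Algebra.linearMap W.CoordinateRing F).compDer d)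
  obtain ⟨π, hπ⟩ : ∃ π : R[X][Y] →+* F,
    π = (algebraMap W.CoordinateRing F).comp (Affine.CoordinateRing.mk W) := ⟨_, rfl⟩
  have hC (a) : π (C (C a)) = algebraMap R F a := by
    rw [hπ, IsScalarTower.algebraMap_apply R W.CoordinateRing F]
    rfl
  have hDπ (g) : D (π g) = π (hamiltonianDerivation W g) := by simp [hπ, hD, hd]
  have hx : D (π (C X)) = 2 * π Y := by
    simp [hDπ, hamiltonianDerivation_C, Affine.polynomialY, hC, map_ofNat (algebraMap R F)]
  have hy : D (π Y) = 3 * π (C X) ^ 2 + algebraMap R F W.a₄ := by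
    simp [hDπ, hamiltonianDerivation_X, Affine.polynomialX, hC, map_ofNat (algebraMap R F)]
  have hY : π Y ≠ 0 := by
    simpa [hπ, Affine.CoordinateRing.YClass] using Affine.CoordinateRing.YClass_ne_zero (W' := W) 0
  have : CharZero F := charZero_of_injective_algebraMap (R := R) <| by
    rw [IsScalarTower.algebraMap_eq R W.CoordinateRing F]
    exact (IsFractionRing.injective W.CoordinateRing F).comp
      (FaithfulSMul.algebraMap_injective R W.CoordinateRing)
  have hns : (W.map (algebraMap R F)).toAffine.Nonsingular (π (C X)) (π Y) := by
    refine (Affine.nonsingular_iff _ _).mpr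
      ⟨equation_map_of_polynomial_eq_zero W hC (by simp [hπ]), .inr ?_⟩
    simpa [eq_neg_iff_add_eq_zero, ← two_mul] using hY
  have hX : π (C X) = algebraMap W.CoordinateRing F (algebraMap R[X] _ X) := by simp [hπ]
  let δ : Differential F := ⟨D.restrictScalars ℤ⟩
  exact ⟨δ, .some _ _ hns, D.map_algebraMap, ⟨hx.trans (by simp), hy.trans (by simp)⟩,
    by simpa only [xCoord_some, hX] using transcendental_algebraMap_X W F⟩

end GenericPoint

section ShortCubic

/-- The cubic `X³ + aX + b`. -/
noncomputable def shortCubic {R : Type*} [CommRing R] (a b : R) : R[X] := X ^ 3 + C a * X + C b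

variable {R : Type*} [CommRing R] {a b : R}

lemma shortCubic_natDegree [Nontrivial R] : (shortCubic a b).natDegree = 3 := by
  unfold shortCubic
  compute_degree!

lemma shortCubic_monic : (shortCubic a b).Monic := by
  unfold shortCubic
  monicity!

lemma shortCubic_map {S : Type*} [CommRing S] (ρ : R →+* S) :
    (shortCubic a b).map ρ = shortCubic (ρ a) (ρ b) := by
  simp [shortCubic]

lemma derivative_shortCubic (a b : R) : derivative (shortCubic a b) = 3 * X ^ 2 + C a := by
  simp only [shortCubic, derivative_add, derivative_X_pow, derivative_C_mul_X, derivative_C,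
    Nat.cast_ofNat, map_ofNat, add_zero, Nat.add_one_sub_one]

lemma Ψ₂Sq_eq_four_mul_shortCubic (W : WeierstrassCurve R) [W.IsShortNF] :
    W.Ψ₂Sq = 4 * shortCubic W.a₄ W.a₆ := by
  simp only [Ψ₂Sq, b₂_of_isShortNF, b₄_of_isShortNF, b₆_of_isShortNF, map_mul, map_ofNat, map_zero,
    shortCubic]
  ring

end ShortCubic

section TodaPolynomial

open scoped Differential

lemma aeval_deriv {R F : Type*} [CommRing R] [CommRing F] [Algebra R F] [Differential F]
    (hR : ∀ a, (algebraMap R F a)′ = 0) (x : F) (g : R[X]) :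
    (aeval x g)′ = aeval x (derivative g) * x′ := by
  induction g using Polynomial.induction_on' with
  | add p q hp hq => simp only [map_add, hp, hq, add_mul]
  | monomial n a =>
    simp only [derivative_monomial, aeval_monomial, Derivation.leibniz, Derivation.leibniz_pow, hR,
      smul_eq_mul, nsmul_eq_mul, map_mul, map_natCast, mul_zero, add_zero]
    ring

lemma Ψ₂Sq_eval_short {F : Type*} [Field F] {W : Affine F} [W.IsShortNF] {x y : F}
    (h : W.Equation x y) : W.Ψ₂Sq.eval x = (2 * y) ^ 2 := by
  rw [Ψ₂Sq_eq_four_mul_shortCubic]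
  simp only [shortCubic, eval_add, eval_mul, eval_ofNat, eval_pow, eval_X, eval_C]
  linear_combination -4 * equation_short h

lemma divisionValue_natCast {F : Type*} [Field F] {W : Affine F} [W.IsShortNF] {P : W.Point}
    (hP : P ≠ 0) (n : ℕ) : divisionValue P n =
      (W.preΨ' n).eval (xCoord P) * if Even n then 2 * yCoord P else 1 := by
  obtain ⟨x, y, h, rfl⟩ := exists_eq_some hP
  rw [divisionValue, normEDS_ofNat, preΨ', xCoord_some, yCoord_some, ← coe_evalRingHom,
    map_preNormEDS', map_pow, coe_evalRingHom, Ψ₂Sq_eval_short h.1, ← pow_mul]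

lemma derivative_Ψ₂Sq_short {R : Type*} [CommRing R] (W : WeierstrassCurve R) [W.IsShortNF] :
    derivative W.Ψ₂Sq = 4 * (3 * X ^ 2 + C W.a₄) := by
  rw [Ψ₂Sq_eq_four_mul_shortCubic, ← C_ofNat, derivative_C_mul, derivative_shortCubic]

variable {R : Type*} [CommRing R] [CharZero R] (W : WeierstrassCurve R) [W.IsShortNF]

theorem preΨ'_toda_of_transcendental {F : Type*} [Field F] [Differential F] [Algebra R F]
    (hR : ∀ a, (algebraMap R F a)′ = 0) {P : (W.map (algebraMap R F)).toAffine.Point}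
    (hP : HasVelocity 1 P) (hx : Transcendental R (xCoord P)) {n : ℕ} (hn : Odd n) :
    W.preΨ' n * (2 * W.Ψ₂Sq * derivative (derivative (W.preΨ' n)) +
        derivative W.Ψ₂Sq * derivative (W.preΨ' n)) =
      2 * W.Ψ₂Sq * (derivative (W.preΨ' n) ^ 2 +
        n ^ 2 * (W.preΨ' (n + 1) * W.preΨ' (n - 1))) := by
  classical
  have hinj := transcendental_iff_injective.mp hx
  have : CharZero F := charZero_of_injective_ringHom (f := (aeval (xCoord P)).toRingHom) hinj
  have hP₀ : P ≠ 0 := fun h ↦ zero_ne_one (h ▸ hP).symm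
  have hval (m : ℕ) : divisionValue P m =
      aeval (xCoord P) (W.preΨ' m) * if Even m then 2 * yCoord P else 1 := by
    rw [divisionValue_natCast hP₀, map_preΨ', eval_map_algebraMap]
  have htoda := divisionValue_toda (hR W.a₄) hP hn.pos.ne'
  rw [← Nat.cast_add_one, ← Nat.cast_pred hn.pos, hval, hval, hval,
    if_neg (Nat.not_even_iff_odd.mpr hn), if_pos (hn.add_odd odd_one),
    if_pos (hn.tsub_odd odd_one)] at htoda
  obtain ⟨x, y, h, rfl⟩ := exists_eq_some hP₀
  obtain ⟨hx', hy'⟩ := hP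
  have hΨ : aeval x W.Ψ₂Sq = (2 * y) ^ 2 := by
    rw [← Ψ₂Sq_eval_short h.1, map_Ψ₂Sq, eval_map_algebraMap]
  have h2 : (2 : F)′ = 0 := mod_cast Derivation.map_natCast Differential.deriv 2
  apply hinj
  simp only [xCoord_some, yCoord_some, mul_one, one_mul, Derivation.leibniz, aeval_deriv hR, hx',
    hy', h2, smul_eq_mul, map_a₄] at htoda ⊢
  simp only [map_mul, map_add, map_pow, map_natCast, map_ofNat, hΨ, derivative_Ψ₂Sq_short, aeval_X,
    aeval_C]
  linear_combination 2 * htoda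

theorem preΨ'_toda [IsDomain R] {n : ℕ} (hn : Odd n) :
    W.preΨ' n * (2 * W.Ψ₂Sq * derivative (derivative (W.preΨ' n)) +
        derivative W.Ψ₂Sq * derivative (W.preΨ' n)) =
      2 * W.Ψ₂Sq * (derivative (W.preΨ' n) ^ 2 +
        n ^ 2 * (W.preΨ' (n + 1) * W.preΨ' (n - 1))) := by
  obtain ⟨_, P, hR, hP, hx⟩ := exists_generic_point W.toAffine W.toAffine.FunctionField
  exact preΨ'_toda_of_transcendental W hR hP hx hn

end TodaPolynomial

/-! ### The leading coefficient of `θ` as a Hasse invariant -/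

section HasseInvariant

/-- The Hasse invariant `[X²ʰ] (X³ + aX + b)ʰ` of `y² = x³ + ax + b`, relevant in characteristic
`p = 2h + 1`. -/
noncomputable def hasseInvariant {R : Type*} [CommRing R] (h : ℕ) (a b : R) : R :=
  (shortCubic a b ^ h).coeff (2 * h)

variable {R : Type*} [CommRing R] {a b : R}

lemma map_hasseInvariant {S : Type*} [CommRing S] (ρ : R →+* S) (h : ℕ) :
    ρ (hasseInvariant h a b) = hasseInvariant h (ρ a) (ρ b) := by
  rw [hasseInvariant, ← coeff_map, Polynomial.map_pow, shortCubic_map, hasseInvariant]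

lemma coeff_X_mul_derivative (g : R[X]) (n : ℕ) : (X * derivative g).coeff n = n * g.coeff n := by
  cases n with
  | zero => simp
  | succ n => rw [coeff_X_mul, coeff_derivative, Nat.cast_succ, mul_comm]

lemma natDegree_X_mul_derivative_le (g : R[X]) : (X * derivative g).natDegree ≤ g.natDegree :=
  natDegree_le_iff_coeff_eq_zero.mpr fun n hn ↦ by
    rw [coeff_X_mul_derivative, coeff_eq_zero_of_natDegree_lt hn, mul_zero]

-- The coefficient of `X ^ (natDegree f + natDegree w - 1)` is that of the leading terms.
lemma two_mul_natDegree_add_natDegree_eq_zero [IsDomain R] {f w : R[X]} (hf : f.Monic) (hw : w ≠ 0)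
    (h : 2 * f * derivative w + derivative f * w = 0) :
    2 * (w.natDegree : R) + f.natDegree = 0 := by
  have hX : C 2 * (f * (X * derivative w)) + X * derivative f * w = 0 := by
    rw [map_ofNat]
    linear_combination X * h
  have hcoeff := congr_arg (coeff · (f.natDegree + w.natDegree)) hX
  simp only [coeff_add, coeff_C_mul, coeff_zero,
    coeff_mul_add_eq_of_natDegree_le le_rfl (natDegree_X_mul_derivative_le w),
    coeff_mul_add_eq_of_natDegree_le (natDegree_X_mul_derivative_le f) le_rfl,
    coeff_X_mul_derivative, hf.coeff_natDegree] at hcoeff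
  apply mul_right_cancel₀ (leadingCoeff_ne_zero.mpr hw)
  rw [leadingCoeff]
  linear_combination hcoeff

lemma two_mul_mul_derivative_pow {h : ℕ} (hR : (2 * h + 1 : R) = 0) (f : R[X]) :
    2 * f * derivative (f ^ h) + derivative f * f ^ h = 0 := by
  have hC : (2 * h + 1 : R[X]) = 0 := by
    simpa only [map_add, map_mul, map_natCast, map_ofNat, map_one, map_zero] using congr_arg C hR
  cases h with
  | zero => simp_all
  | succ h =>
    rw [derivative_pow_succ, map_add, map_natCast, map_one]
    push_cast at hC
    linear_combination f ^ (h + 1) * derivative f * hC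

lemma two_mul_natCast_add_one_eq_zero {p h : ℕ} [CharP R p] (hp : p = 2 * h + 1) :
    (2 * h + 1 : R) = 0 := by
  exact_mod_cast hp ▸ CharP.cast_eq_zero R p

lemma two_mul_natCast_ne_zero [Nontrivial R] {p h : ℕ} [CharP R p] (hp : p = 2 * h + 1) :
    (2 * h : R) ≠ 0 := by
  intro h₀
  simpa [h₀] using two_mul_natCast_add_one_eq_zero (R := R) hp

-- The degrees of two solutions are congruent modulo `p`, since `2 * degree + 3 = 0` in `R`.
lemma coeff_eq_zero_of_solution [IsDomain R] {p h : ℕ} [CharP R p] (hp : p = 2 * h + 1) {w : R[X]}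
    (hw : 2 * shortCubic a b * derivative w + derivative (shortCubic a b) * w = 0)
    (hdeg : w.natDegree ≤ p * h + h - 1) (hlead : w.coeff (p * h + h - 1) = 0) :
    w.coeff (p * h - 1) = 0 := by
  by_cases hw₀ : w = 0
  · rw [hw₀, coeff_zero]
  have hlt : w.natDegree < p * h + h - 1 :=
    lt_of_le_of_ne hdeg fun h₀ ↦ hw₀ (leadingCoeff_eq_zero.mp (by rwa [leadingCoeff, h₀]))
  have hcast := two_mul_natDegree_add_natDegree_eq_zero shortCubic_monic hw₀ hw
  rw [shortCubic_natDegree] at hcast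
  have hdvd : p ∣ 2 * w.natDegree + 3 := by
    rw [← CharP.cast_eq_zero_iff R p]
    exact_mod_cast hcast
  have hdvd' : p ∣ (p * h + h - 1 - w.natDegree) * 2 := by
    have hpp : p * p = 2 * (p * h + h) + 1 := by rw [hp]; ring
    convert Nat.dvd_sub (dvd_mul_left p p) hdvd using 1
    lia
  have hcop : p.Coprime 2 := by
    rw [Nat.coprime_two_right, hp]
    exact odd_two_mul_add_one h
  have := Nat.le_of_dvd (by lia) (hcop.dvd_of_dvd_mul_right hdvd')
  exact coeff_eq_zero_of_natDegree_lt (by lia)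

-- `X ^ (p * (h - 1)) * f ^ h` is a solution of the same degree as `g`.
theorem coeff_eq_mul_hasseInvariant [IsDomain R] {p h : ℕ} [CharP R p] (hp : p = 2 * h + 1)
    (hh : h ≠ 0) {g : R[X]}
    (hg : 2 * shortCubic a b * derivative g + derivative (shortCubic a b) * g = 0)
    (hdeg : g.natDegree ≤ p * h + h - 1) :
    g.coeff (p * h - 1) = g.coeff (p * h + h - 1) * hasseInvariant h a b := by
  have hlow : p * h + h - 1 = 3 * h + p * (h - 1) := by
    obtain ⟨m, rfl⟩ := Nat.exists_eq_succ_of_ne_zero hh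
    grind
  set f := shortCubic a b
  set c := g.coeff (p * h + h - 1)
  set u := C c * (f ^ h * X ^ (p * (h - 1))) with hu
  have hfdeg : (f ^ h).natDegree = 3 * h := by
    rw [shortCubic_monic.natDegree_pow, shortCubic_natDegree, mul_comm]
  have hudeg : u.natDegree ≤ p * h + h - 1 := by
    rw [hlow, ← hfdeg]
    exact (natDegree_C_mul_le _ _).trans (natDegree_mul_le.trans_eq (by rw [natDegree_X_pow]))
  have hulead : u.coeff (p * h + h - 1) = c := by
    rw [hlow, coeff_C_mul, coeff_mul_X_pow, ← hfdeg, (shortCubic_monic.pow h).coeff_natDegree,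
      mul_one]
  have hucoeff : u.coeff (p * h - 1) = c * hasseInvariant h a b := by
    rw [show p * h - 1 = 2 * h + p * (h - 1) by lia, coeff_C_mul, coeff_mul_X_pow, hasseInvariant]
  have hode : 2 * f * derivative (g - u) + derivative f * (g - u) = 0 := by
    have hX : derivative (X ^ (p * (h - 1)) : R[X]) = 0 := by
      rw [derivative_X_pow, Nat.cast_mul, CharP.cast_eq_zero, zero_mul, C_0, zero_mul]
    rw [hu, derivative_sub, derivative_C_mul, derivative_mul, hX]
    have hf := two_mul_mul_derivative_pow (two_mul_natCast_add_one_eq_zero hp) f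
    linear_combination hg - C c * X ^ (p * (h - 1)) * hf
  have := coeff_eq_zero_of_solution hp hode
    ((natDegree_sub_le_of_le hdeg hudeg).trans_eq (max_self _))
    (by rw [coeff_sub, hulead, sub_self])
  rwa [coeff_sub, hucoeff, sub_eq_zero] at this

end HasseInvariant

section Nonvanishing

variable {R : Type*} [CommRing R] [IsDomain R]

lemma preNormEDS'_zero_ne_zero {c d : R} (hc : c ≠ 0) {n : ℕ}
    (hn : Odd n) : preNormEDS' 0 c d n ≠ 0 := by
  induction n using Nat.strong_induction_on with
  | _ n ih =>
    obtain ⟨m, rfl⟩ := hn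
    match m with
    | 0 => simp
    | 1 => simpa using hc
    | m + 2 =>
      rw [preNormEDS'_odd]
      rcases m.even_or_odd with hm | hm
      · rw [if_pos hm, if_pos hm, mul_zero, mul_one, zero_sub, neg_ne_zero]
        exact mul_ne_zero (ih _ (by lia) (by grind)) (pow_ne_zero 3 (ih _ (by lia) (by grind)))
      · rw [if_neg (Nat.not_even_iff_odd.mpr hm), if_neg (Nat.not_even_iff_odd.mpr hm), mul_one,
          mul_zero, sub_zero]
        exact mul_ne_zero (ih _ (by lia) (by grind)) (pow_ne_zero 3 (ih _ (by lia) (by grind)))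

lemma eval_preΨ'_ne_zero (W : WeierstrassCurve R) {x : R} (h₂ : W.Ψ₂Sq.eval x = 0)
    (h₃ : W.Ψ₃.eval x ≠ 0) {n : ℕ} (hn : Odd n) : (W.preΨ' n).eval x ≠ 0 := by
  rw [preΨ', ← coe_evalRingHom, map_preNormEDS', map_pow, coe_evalRingHom, h₂,
    zero_pow two_ne_zero]
  exact preNormEDS'_zero_ne_zero h₃ hn

-- Specialise to `y² = x³ + x` and its point `(0, 0)` of order two.
lemma preΨ'_Wst_map_ne_zero {n : ℕ} (hn : Odd n) :
    ((Wst ℤ).preΨ' n).map (MvPolynomial.map (Int.castRingHom R)) ≠ 0 := by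
  set φ : MvPolynomial (Fin 2) R →+* R := MvPolynomial.eval ![1, 0]
  set W := ((Wst ℤ).map (MvPolynomial.map (Int.castRingHom R))).map φ
  have h₂ : W.Ψ₂Sq.eval 0 = 0 := by
    simp [W, φ, Ψ₂Sq, b₂, b₄, b₆, Wst]
  have h₃ : W.Ψ₃.eval 0 ≠ 0 := by
    simp [W, φ, Ψ₃, b₂, b₄, b₆, b₈, Wst]
  intro h
  rw [← map_preΨ'] at h
  refine eval_preΨ'_ne_zero W h₂ h₃ hn ?_
  rw [map_preΨ', h, Polynomial.map_zero, eval_zero]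

end Nonvanishing

section Reduction

lemma mul_coeff_pred_of_derivative_eq {R : Type*} [CommRing R] {c : R} {f g : R[X]}
    (h : derivative f = C c * g) {m : ℕ} (hm : m ≠ 0) : c * g.coeff (m - 1) = f.coeff m * m := by
  obtain ⟨m, rfl⟩ := Nat.exists_eq_succ_of_ne_zero hm
  rw [← coeff_C_mul, ← h, Nat.succ_sub_one, coeff_derivative, Nat.cast_succ]

lemma C_dvd_of_map_eq_zero {R k : Type*} [CommRing R] [CommRing k] {ρ : R →+* k} {c : R}
    (hρ : ∀ a, ρ a = 0 → c ∣ a) {f : R[X]} (hf : f.map ρ = 0) :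
    C c ∣ f :=
  (C_dvd_iff_dvd_coeff _ _).mpr fun i ↦ hρ _ (by rw [← coeff_map, hf, coeff_zero])

lemma sq_sub_ite_even_div_two {p h : ℕ} (hp : p = 2 * h + 1) :
    (p ^ 2 - if Even p then 4 else 1) / 2 = p * h + h := by
  rw [if_neg (Nat.not_even_iff_odd.mpr ⟨h, hp⟩), hp]
  grind

lemma natDegree_preΨ'_two_mul_add_one_le {R : Type*} [CommRing R] (W : WeierstrassCurve R) {p h : ℕ}
    (hp : p = 2 * h + 1) : (W.preΨ' p).natDegree ≤ p * h + h :=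
  sq_sub_ite_even_div_two hp ▸ W.natDegree_preΨ'_le p

lemma coeff_preΨ'_two_mul_add_one {R : Type*} [CommRing R] (W : WeierstrassCurve R) {p h : ℕ}
    (hp : p = 2 * h + 1) : (W.preΨ' p).coeff (p * h + h) = p := by
  rw [← sq_sub_ite_even_div_two hp, coeff_preΨ', if_neg (Nat.not_even_iff_odd.mpr ⟨h, hp⟩)]

lemma prime_natCast_of_ker {R k : Type*} [CommRing R] [CharZero R] [CommRing k] [IsDomain k] {p : ℕ}
    [CharP k p] {ρ : R →+* k} (hp : p ≠ 0) (hρ : ∀ a, ρ a = 0 → (p : R) ∣ a) :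
    Prime (p : R) := by
  rw [← Ideal.span_singleton_prime (Nat.cast_ne_zero.mpr hp)]
  convert RingHom.ker_isPrime ρ
  ext a
  rw [Ideal.mem_span_singleton, RingHom.mem_ker]
  refine ⟨?_, hρ a⟩
  rintro ⟨b, rfl⟩
  rw [map_mul, map_natCast, CharP.cast_eq_zero, zero_mul]

variable {R : Type*} [CommRing R] [IsDomain R] [CharZero R] (W : WeierstrassCurve R) [W.IsShortNF]

theorem C_dvd_of_derivative_preΨ'_eq {p : ℕ} (hp : Odd p) (hpR : Prime (p : R)) {G : R[X]}
    (hG : derivative (W.preΨ' p) = C (p : R) * G) (hΨ : ¬C (p : R) ∣ W.preΨ' p) :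
    C (p : R) ∣ 2 * W.Ψ₂Sq * derivative G + derivative W.Ψ₂Sq * G := by
  have hpC : Prime (C (p : R)) := prime_C_iff.mpr hpR
  refine (hpC.dvd_or_dvd (a := W.preΨ' p) ⟨2 * W.Ψ₂Sq * (G ^ 2 +
    W.preΨ' (p + 1) * W.preΨ' (p - 1)), mul_left_cancel₀ hpC.ne_zero ?_⟩).resolve_left hΨ
  have htoda := preΨ'_toda W hp
  rw [hG, derivative_C_mul, ← C_eq_natCast] at htoda
  linear_combination htoda

variable {k : Type*} [CommRing k] [IsDomain k] {p : ℕ} [CharP k p] {ρ : R →+* k}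

lemma solution_of_derivative_preΨ'_eq (hp : Odd p) (hρ : ∀ a, ρ a = 0 → (p : R) ∣ a)
    (hΨ : (W.preΨ' p).map ρ ≠ 0) {G : R[X]} (hG : derivative (W.preΨ' p) = C (p : R) * G) :
    2 * shortCubic (ρ W.a₄) (ρ W.a₆) * derivative (G.map ρ) +
      derivative (shortCubic (ρ W.a₄) (ρ W.a₆)) * G.map ρ = 0 := by
  have hmap {f : R[X]} (hf : C (p : R) ∣ f) : f.map ρ = 0 := by
    obtain ⟨g, rfl⟩ := hf
    rw [Polynomial.map_mul, map_C, map_natCast, CharP.cast_eq_zero, C_0, zero_mul]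
  have h := hmap (C_dvd_of_derivative_preΨ'_eq W hp (prime_natCast_of_ker hp.pos.ne' hρ) hG
    fun h ↦ hΨ (hmap h))
  have hf : W.Ψ₂Sq.map ρ = 4 * shortCubic (ρ W.a₄) (ρ W.a₆) := by
    rw [Ψ₂Sq_eq_four_mul_shortCubic, Polynomial.map_mul, Polynomial.map_ofNat, shortCubic_map]
  have hf' : (derivative W.Ψ₂Sq).map ρ = 4 * derivative (shortCubic (ρ W.a₄) (ρ W.a₆)) := by
    rw [← derivative_map, hf, ← C_ofNat, derivative_C_mul]
  simp only [Polynomial.map_add, Polynomial.map_mul, Polynomial.map_ofNat, ← derivative_map, hf,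
    hf'] at h
  have h₄ : (4 : k[X]) ≠ 0 := by
    obtain ⟨m, hm⟩ := hp
    have h₂ : (2 : k) ≠ 0 := left_ne_zero_of_mul (two_mul_natCast_ne_zero hm)
    rw [← C_ofNat, Ne, C_eq_zero, show (4 : k) = 2 ^ 2 by norm_num]
    exact pow_ne_zero 2 h₂
  apply mul_left_cancel₀ h₄
  linear_combination h

theorem coeff_eq_hasseInvariant {h : ℕ}
    (hp : p = 2 * h + 1) (hρ : ∀ a, ρ a = 0 → (p : R) ∣ a) {θ : k[X]} (hθ₀ : θ ≠ 0)
    (hθ : θ.comp (X ^ p) = (W.preΨ' p).map ρ) :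
    θ.coeff h = hasseInvariant h (ρ W.a₄) (ρ W.a₆) := by
  have hodd : Odd p := ⟨h, hp⟩
  have hpR : (p : R) ≠ 0 := Nat.cast_ne_zero.mpr hodd.pos.ne'
  have hhk : (h : k) ≠ 0 := right_ne_zero_of_mul (two_mul_natCast_ne_zero hp)
  have hh₀ : h ≠ 0 := fun h₀ ↦ hhk (by rw [h₀, Nat.cast_zero])
  rw [← expand_eq_comp_X_pow] at hθ
  have hΨ : (W.preΨ' p).map ρ ≠ 0 := by rwa [← hθ, expand_ne_zero hodd.pos]
  obtain ⟨G, hG⟩ : C (p : R) ∣ derivative (W.preΨ' p) := by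
    refine C_dvd_of_map_eq_zero hρ ?_
    rw [← derivative_map, ← hθ, derivative_expand, CharP.cast_eq_zero, zero_mul, mul_zero]
  have hdegG : G.natDegree ≤ p * h + h - 1 := by
    rw [← natDegree_C_mul hpR, ← hG]
    exact (natDegree_derivative_le _).trans
      (Nat.sub_le_sub_right (natDegree_preΨ'_two_mul_add_one_le W hp) 1)
  have hlead : G.coeff (p * h + h - 1) = p * h + h := by
    apply mul_left_cancel₀ hpR
    rw [mul_coeff_pred_of_derivative_eq hG (by lia), coeff_preΨ'_two_mul_add_one W hp]
    push_cast
    rfl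
  have hlow : G.coeff (p * h - 1) = h * (W.preΨ' p).coeff (p * h) := by
    apply mul_left_cancel₀ hpR
    rw [mul_coeff_pred_of_derivative_eq hG (mul_ne_zero hodd.pos.ne' hh₀)]
    push_cast
    ring
  have key := coeff_eq_mul_hasseInvariant hp hh₀ (solution_of_derivative_preΨ'_eq W hodd hρ hΨ hG)
    (natDegree_map_le.trans hdegG)
  rw [coeff_map, coeff_map, hlow, hlead, map_mul, ← coeff_map, ← hθ, mul_comm p,
    coeff_expand_mul hodd.pos] at key
  simp only [map_add, map_mul, map_natCast, CharP.cast_eq_zero, zero_mul, zero_add] at key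
  exact mul_left_cancel₀ hhk key

end Reduction

/-! ### Repeated factors of the Hasse invariant -/

section DifferentialEquations

variable {A R : Type*} [CommRing A] [CommRing R] [Algebra A R]

lemma derivation_derivation_pow (D : Derivation A R R) (f : R) (n : ℕ) :
    D (D (f ^ (n + 2))) = (n + 2) * ((n + 1) * f ^ n * D f ^ 2 + f ^ (n + 1) * D (D f)) := by
  rw [D.leibniz_pow, map_nsmul, Nat.add_succ_sub_one, smul_eq_mul, D.leibniz, D.leibniz_pow,
    Nat.add_sub_cancel]
  simp only [smul_eq_mul, nsmul_eq_mul]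
  push_cast
  ring

lemma coeffDerivation_shortCubic (D : Derivation A R R) (a b : R) :
    coeffDerivation D (shortCubic a b) = C (D a) * X + C (D b) := by
  simp only [shortCubic, map_add, Derivation.leibniz, Derivation.leibniz_pow, coeffDerivation_C,
    coeffDerivation_X, smul_eq_mul, mul_zero, smul_zero, zero_add]
  ring

variable {s t : R}

theorem euler_hasseInvariant {E : Derivation A R R} (hs : E s = 2 * s) (ht : E t = 3 * t) (h : ℕ) :
    E (hasseInvariant h s t) = h * hasseInvariant h s t := by
  set f := shortCubic s t with hf
  have hEf : coeffDerivation E f = 3 * f - X * derivative f := by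
    rw [hf, coeffDerivation_shortCubic, derivative_shortCubic, shortCubic, hs, ht]
    simp only [map_mul, map_ofNat]
    ring
  have hEpow : coeffDerivation E (f ^ h) = C (3 * h : R) * f ^ h - X * derivative (f ^ h) := by
    cases h with
    | zero => simp
    | succ h =>
      rw [Derivation.leibniz_pow, hEf, derivative_pow_succ, Nat.add_sub_cancel]
      simp only [smul_eq_mul, nsmul_eq_mul, map_mul, map_ofNat, map_add, map_one, map_natCast,
        Nat.cast_succ]
      ring
  rw [hasseInvariant, ← coeff_coeffDerivation, hEpow, coeff_sub, coeff_C_mul,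
    coeff_X_mul_derivative]
  push_cast
  ring

lemma coeffDerivation_coeffDerivation_shortCubic {L : Derivation A R R} (hs : L s = 9 * t)
    (ht : L t = -2 * s ^ 2) :
    coeffDerivation L (coeffDerivation L (shortCubic s t)) =
      -18 * C s ^ 2 * X - 36 * C s * C t := by
  have hLLs : L (L s) = -18 * s ^ 2 := by
    rw [hs, ← Nat.cast_ofNat, ← nsmul_eq_mul, map_nsmul, ht, nsmul_eq_mul]
    push_cast
    ring
  have hLLt : L (L t) = -36 * s * t := by
    rw [ht, neg_mul, map_neg, ← Nat.cast_ofNat, ← nsmul_eq_mul, map_nsmul, L.leibniz_pow, hs]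
    simp only [nsmul_eq_mul, smul_eq_mul]
    push_cast
    ring
  rw [coeffDerivation_shortCubic, map_add, Derivation.leibniz, coeffDerivation_C,
    coeffDerivation_C, coeffDerivation_X, hLLs, hLLt, smul_zero, zero_add, smul_eq_mul]
  simp only [map_mul, map_neg, map_pow, map_ofNat]
  ring

-- The Picard–Fuchs equation of the periods `∫ f ^ (-1/2) dx`: here `n + 2 = -1/2` in `R`.
lemma picardFuchs_shortCubic {L : Derivation A R R} (hs : L s = 9 * t) (ht : L t = -2 * s ^ 2)
    {n : ℕ} (hn : (2 * n + 5 : R) = 0) :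
    4 * coeffDerivation L (coeffDerivation L (shortCubic s t ^ (n + 2))) =
      3 * C s * shortCubic s t ^ (n + 2) + derivative (2 * (3 * C s * X ^ 4 - 3 * C s ^ 2 * X ^ 2 -
        6 * C s * C t * X - (4 * C s ^ 3 + 27 * C t ^ 2)) * shortCubic s t ^ (n + 1)) := by
  set D := coeffDerivation L
  set f := shortCubic s t with hf
  set r := 3 * C s * X ^ 4 - 3 * C s ^ 2 * X ^ 2 - 6 * C s * C t * X - (4 * C s ^ 3 + 27 * C t ^ 2)
    with hr
  have hn : (2 * n + 5 : R[X]) = 0 := by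
    simpa only [map_add, map_mul, map_natCast, map_ofNat, map_zero] using congr_arg C hn
  have hDf : D f = 9 * C t * X - 2 * C s ^ 2 := by
    rw [hf, coeffDerivation_shortCubic, hs, ht]
    simp only [map_mul, map_neg, map_pow, map_ofNat]
    ring
  have hdr : derivative r = 12 * C s * X ^ 3 - 6 * C s ^ 2 * X - 6 * C s * C t := by
    simp only [hr, derivative_sub, derivative_add, derivative_mul, derivative_pow, derivative_ofNat,
      derivative_C, derivative_X, Nat.cast_ofNat, map_ofNat]
    ring
  have hquad : 4 * (n + 2) * ((n + 1) * D f ^ 2 + f * D (D f)) =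
      3 * C s * f ^ 2 + 2 * (derivative r * f + (n + 1) * r * derivative f) := by
    rw [coeffDerivation_coeffDerivation_shortCubic hs ht, hDf, hdr, hf,
      derivative_shortCubic, hr, shortCubic]
    linear_combination ((2 * n + 1) * (9 * C t * X - 2 * C s ^ 2) ^ 2 +
      2 * (X ^ 3 + C s * X + C t) * (-18 * C s ^ 2 * X - 36 * C s * C t) -
      r * (3 * X ^ 2 + C s)) * hn
  rw [derivation_derivation_pow, derivative_mul, derivative_mul, derivative_ofNat,
    derivative_pow_succ, map_add, map_natCast, map_one]
  linear_combination f ^ n * hquad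

theorem picardFuchs_hasseInvariant {L : Derivation A R R} (hs : L s = 9 * t)
    (ht : L t = -2 * s ^ 2) {h : ℕ} (hh : 2 ≤ h) (hR : (2 * h + 1 : R) = 0) :
    4 * L (L (hasseInvariant h s t)) = 3 * s * hasseInvariant h s t := by
  obtain ⟨n, rfl⟩ := Nat.exists_eq_add_of_le' hh
  have hcoeff := congr_arg (coeff · (2 * (n + 2)))
    (picardFuchs_shortCubic hs ht (n := n) (by push_cast at hR; linear_combination hR))
  simp only [coeff_add, coeff_derivative, ← map_ofNat C, ← C_mul, coeff_C_mul,
    coeff_coeffDerivation] at hcoeff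
  rw [hasseInvariant, hcoeff]
  push_cast at hR ⊢
  rw [hR, mul_zero, add_zero]

end DifferentialEquations

section RepeatedPrime

variable {A R : Type*} [CommRing A] [CommRing R] [IsDomain R] [Algebra A R] {Q a : R} {n : ℕ}

lemma dvd_derivation_of_derivation_eq_mul (hQ : Prime Q) (D : Derivation A R R) {b c : R}
    (ha : a = Q ^ (n + 1) * b) (hb : ¬ Q ∣ b) (hn : ¬ Q ∣ (n + 1 : ℕ)) (hD : D a = c * a) :
    Q ∣ D Q := by
  have hcancel : (n + 1 : ℕ) * (D Q * b) = Q * (c * b - D b) := by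
    apply mul_left_cancel₀ (pow_ne_zero n hQ.ne_zero)
    rw [ha, D.leibniz, D.leibniz_pow, Nat.add_sub_cancel] at hD
    simp only [smul_eq_mul, nsmul_eq_mul] at hD
    linear_combination hD
  exact (hQ.dvd_or_dvd ((hQ.dvd_or_dvd ⟨_, hcancel⟩).resolve_left hn)).resolve_right hb

lemma dvd_derivation_of_derivation_derivation_eq_mul (hQ : Prime Q) (D : Derivation A R R)
    {b c u : R} (ha : a = Q ^ (n + 2) * b) (hb : ¬ Q ∣ b) (hu : ¬ Q ∣ u) (hn₁ : ¬ Q ∣ (n + 1 : ℕ))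
    (hn₂ : ¬ Q ∣ (n + 2 : ℕ)) (hD : u * D (D a) = c * a) :
    Q ∣ D Q := by
  have hDa : D (D a) = D (D (Q ^ (n + 2))) * b + 2 * D (Q ^ (n + 2)) * D b +
      Q ^ (n + 2) * D (D b) := by
    rw [ha, D.leibniz, map_add, smul_eq_mul, smul_eq_mul, D.leibniz, D.leibniz]
    simp only [smul_eq_mul]
    ring
  have hcancel : u * ((n + 1 : ℕ) * ((n + 2 : ℕ) * (D Q ^ 2 * b))) =
      Q * (c * Q * b - u * ((n + 2) * (D (D Q) * b + 2 * D Q * D b) + Q * D (D b))) := by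
    apply mul_left_cancel₀ (pow_ne_zero n hQ.ne_zero)
    rw [hDa, derivation_derivation_pow, D.leibniz_pow, ha] at hD
    simp only [smul_eq_mul, nsmul_eq_mul] at hD
    push_cast at hD ⊢
    linear_combination hD
  have h₁ := (hQ.dvd_or_dvd ⟨_, hcancel⟩).resolve_left hu
  have h₂ := (hQ.dvd_or_dvd h₁).resolve_left hn₁
  have h₃ := (hQ.dvd_or_dvd h₂).resolve_left hn₂
  exact hQ.dvd_of_dvd_pow ((hQ.dvd_or_dvd h₃).resolve_right hb)

end RepeatedPrime

section SingularCubic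

lemma coeff_X_sub_C_pow_mul {R : Type*} [CommRing R] {p : ℕ} [Fact p.Prime] [CharP R p] (u : R)
    {g : R[X]} (hg : g.natDegree < p) : ((X - C u) ^ (p - 1) * g).coeff (p - 1) = g.eval u := by
  have hp : p - 1 + 1 = p := Nat.sub_add_cancel (Fact.out : p.Prime).one_le
  have hgeom : (X - C u) ^ (p - 1) = ∑ i ∈ Finset.range p, X ^ i * C u ^ (p - 1 - i) := by
    apply (monic_X_sub_C u).isRegular.right
    simp only [geom_sum₂_mul, ← pow_succ, hp, sub_pow_char]
  have hcoeff : ∀ i < p, ((X - C u) ^ (p - 1)).coeff i = u ^ (p - 1 - i) := by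
    intro i hi
    simp only [hgeom, finsetSum_coeff, ← C_pow, coeff_mul_C, coeff_X_pow, ite_mul, one_mul,
      zero_mul, Finset.sum_ite_eq, Finset.mem_range, if_pos hi]
  rw [coeff_mul, Finset.Nat.sum_antidiagonal_eq_sum_range_succ_mk, Nat.succ_eq_add_one, hp,
    eval_eq_sum_range' hg, ← Finset.sum_range_reflect]
  refine Finset.sum_congr rfl fun i hi ↦ ?_
  rw [Finset.mem_range] at hi
  rw [hcoeff _ (by lia), show p - 1 - (p - 1 - i) = i by lia, mul_comm]

variable {F : Type*} [Field F] {p h : ℕ} [Fact p.Prime] [CharP F p]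

-- Here `X³ - 3u²X + 2u³ = (X - u)²(X + 2u)`.
lemma hasseInvariant_neg_three_mul_sq (hp : p = 2 * h + 1) (u : F) :
    hasseInvariant h (-3 * u ^ 2) (2 * u ^ 3) = (3 * u) ^ h := by
  have hfactor : shortCubic (-3 * u ^ 2) (2 * u ^ 3) = (X - C u) ^ 2 * (X + C (2 * u)) := by
    simp only [shortCubic, map_mul, map_neg, map_pow, map_ofNat]
    ring
  have hdeg : ((X + C (2 * u)) ^ h).natDegree < p := by
    rw [natDegree_pow, natDegree_X_add_C]
    lia
  rw [hasseInvariant, hfactor, mul_pow, ← pow_mul, show 2 * h = p - 1 by lia,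
    coeff_X_sub_C_pow_mul u hdeg, eval_pow, eval_add, eval_X, eval_C]
  ring

lemma hasseInvariant_ne_zero_of_singular (hp : p = 2 * h + 1) (hh : 2 ≤ h) {a b : F}
    (ha : a ≠ 0) (hΔ : 4 * a ^ 3 + 27 * b ^ 2 = 0) : hasseInvariant h a b ≠ 0 := by
  have h2 : (2 : F) ≠ 0 :=
    mod_cast CharP.cast_ne_zero_of_ne_of_prime F (p := p) Nat.prime_two (by lia)
  have h3 : (3 : F) ≠ 0 :=
    mod_cast CharP.cast_ne_zero_of_ne_of_prime F (p := p) Nat.prime_three (by lia)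
  obtain ⟨u, hau⟩ : ∃ u, 2 * a * u = -3 * b := ⟨-3 * b / (2 * a), by field_simp⟩
  have ha_eq : a = -3 * u ^ 2 := by
    apply mul_left_cancel₀ (mul_ne_zero (pow_ne_zero 2 h2) (pow_ne_zero 2 ha))
    linear_combination hΔ + 3 * (2 * a * u - 3 * b) * hau
  have hb_eq : b = 2 * u ^ 3 := by
    apply mul_left_cancel₀ h3
    linear_combination hau - 2 * u * ha_eq
  have hu : u ≠ 0 := by
    rintro rfl
    exact ha (by rw [ha_eq, zero_pow two_ne_zero, mul_zero])
  rw [ha_eq, hb_eq, hasseInvariant_neg_three_mul_sq hp]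
  exact pow_ne_zero h (mul_ne_zero h3 hu)

end SingularCubic

section TotalDegree

variable {σ : Type*}

lemma totalDegree_coeff_pow_le {R : Type*} [CommSemiring R] {f : (MvPolynomial σ R)[X]} {d : ℕ}
    (hf : ∀ i, (f.coeff i).totalDegree ≤ d) (n i : ℕ) : ((f ^ n).coeff i).totalDegree ≤ n * d := by
  induction n generalizing i with
  | zero =>
    rw [pow_zero, coeff_one]
    split_ifs <;> simp
  | succ n ih =>
    rw [pow_succ, coeff_mul]
    refine MvPolynomial.totalDegree_finsetSum_le fun ij _ ↦ ?_
    rw [add_mul, one_mul]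
    exact (MvPolynomial.totalDegree_mul _ _).trans (add_le_add (ih _) (hf _))

lemma totalDegree_coeff_shortCubic_le {R : Type*} [CommRing R] {a b : MvPolynomial σ R}
    (ha : a.totalDegree ≤ 1) (hb : b.totalDegree ≤ 1) (i : ℕ) :
    ((shortCubic a b).coeff i).totalDegree ≤ 1 := by
  match i with
  | 0 => simpa [shortCubic] using hb
  | 1 => simpa [shortCubic, coeff_C] using ha
  | 2 | 3 => simp [shortCubic]
  | i + 4 => simp [shortCubic, coeff_X_pow]

lemma totalDegree_hasseInvariant_le {R : Type*} [CommRing R] {a b : MvPolynomial σ R}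
    (ha : a.totalDegree ≤ 1) (hb : b.totalDegree ≤ 1) (h : ℕ) :
    (hasseInvariant h a b).totalDegree ≤ h := by
  simpa only [mul_one, hasseInvariant] using
    totalDegree_coeff_pow_le (totalDegree_coeff_shortCubic_le ha hb) h (2 * h)

lemma totalDegree_pow_of_isDomain {R : Type*} [CommRing R] [IsDomain R] {Q : MvPolynomial σ R}
    (hQ : Q ≠ 0) (n : ℕ) : (Q ^ n).totalDegree = n * Q.totalDegree := by
  induction n with
  | zero => rw [pow_zero, MvPolynomial.totalDegree_one, zero_mul]
  | succ n ih =>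
    rw [pow_succ, MvPolynomial.totalDegree_mul_of_isDomain (pow_ne_zero n hQ) hQ, ih, add_mul,
      one_mul]

lemma mul_totalDegree_le_of_pow_dvd {R : Type*} [CommRing R] [IsDomain R] {Q A : MvPolynomial σ R}
    {n : ℕ} (hA : A ≠ 0) (hdvd : Q ^ n ∣ A) : n * Q.totalDegree ≤ A.totalDegree := by
  rcases eq_or_ne Q 0 with rfl | hQ
  · rw [MvPolynomial.totalDegree_zero, mul_zero]
    exact Nat.zero_le _
  · rw [← totalDegree_pow_of_isDomain hQ]
    exact MvPolynomial.totalDegree_le_of_dvd_of_isDomain hdvd hA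

lemma totalDegree_pos_of_prime {K : Type*} [Field K] {Q : MvPolynomial σ K} (hQ : Prime Q) :
    0 < Q.totalDegree := by
  refine Nat.pos_of_ne_zero fun hdeg ↦ ?_
  rw [MvPolynomial.totalDegree_eq_zero_iff_eq_C] at hdeg
  have hcoeff : Q.coeff 0 ≠ 0 := by
    intro h₀
    rw [h₀, MvPolynomial.C_0] at hdeg
    exact hQ.ne_zero hdeg
  exact hQ.not_isUnit (hdeg ▸ (isUnit_iff_ne_zero.mpr hcoeff).map MvPolynomial.C)

lemma totalDegree_pderiv_lt {R : Type*} [CommSemiring R] {i : σ} {Q : MvPolynomial σ R}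
    (h : MvPolynomial.pderiv i Q ≠ 0) : (MvPolynomial.pderiv i Q).totalDegree < Q.totalDegree := by
  have hlt : ∀ m ∈ (MvPolynomial.pderiv i Q).support, (m.sum fun _ e ↦ e) < Q.totalDegree := by
    intro m hm
    rw [MvPolynomial.mem_support_iff, MvPolynomial.coeff_pderiv] at hm
    have hle := MvPolynomial.le_totalDegree
      (MvPolynomial.mem_support_iff.mpr (left_ne_zero_of_mul hm))
    rw [Finsupp.sum_add_index' (by simp) (by simp), Finsupp.sum_single_index rfl] at hle
    exact hle
  obtain ⟨m, hm⟩ := MvPolynomial.support_nonempty.mpr h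
  rw [MvPolynomial.totalDegree, Finset.sup_lt_iff (bot_le.trans_lt (hlt m hm))]
  exact hlt

lemma pderiv_eq_zero_of_dvd {R : Type*} [CommRing R] [IsDomain R] {i : σ} {Q : MvPolynomial σ R}
    (h : Q ∣ MvPolynomial.pderiv i Q) : MvPolynomial.pderiv i Q = 0 := by
  by_contra h₀
  exact (totalDegree_pderiv_lt h₀).not_ge (MvPolynomial.totalDegree_le_of_dvd_of_isDomain h h₀)

lemma totalDegree_eq_zero_of_pderiv_eq_zero {R : Type*} [CommSemiring R] [NoZeroDivisors R] {p : ℕ}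
    [CharP R p] {Q : MvPolynomial σ R} (hdeg : Q.totalDegree < p)
    (hQ : ∀ i, MvPolynomial.pderiv i Q = 0) : Q.totalDegree = 0 := by
  rw [MvPolynomial.totalDegree_eq_zero_iff]
  intro m hm i
  by_contra hi
  obtain ⟨n, rfl⟩ : ∃ n, m = n + Finsupp.single i 1 :=
    ⟨m - Finsupp.single i 1, (tsub_add_cancel_of_le (by simpa [Nat.one_le_iff_ne_zero])).symm⟩
  have hcoeff : Q.coeff (n + Finsupp.single i 1) * (n i + 1) = 0 := by
    rw [← MvPolynomial.coeff_pderiv, hQ, MvPolynomial.coeff_zero]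
  have hcast : ((n i + 1 : ℕ) : R) = 0 := by
    exact_mod_cast (mul_eq_zero.mp hcoeff).resolve_left (MvPolynomial.mem_support_iff.mp hm)
  have hp := Nat.le_of_dvd (n i).succ_pos ((CharP.cast_eq_zero_iff R p _).mp hcast)
  have hle := Finset.single_le_sum (f := (n + Finsupp.single i 1 : σ →₀ ℕ))
    (fun _ _ ↦ Nat.zero_le _) (Finsupp.mem_support_iff.mpr hi)
  rw [Finsupp.add_apply, Finsupp.single_eq_same] at hle
  exact (hp.trans (hle.trans (MvPolynomial.le_totalDegree hm))).not_gt hdeg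

end TotalDegree

section UniversalCubic

/-- The Euler vector field `2s ∂/∂s + 3t ∂/∂t` on the parameters `s = X 0`, `t = X 1` of
`y² = x³ + sx + t`. -/
noncomputable def eulerField (R : Type*) [CommRing R] :
    Derivation R (MvPolynomial (Fin 2) R) (MvPolynomial (Fin 2) R) :=
  (2 * MvPolynomial.X 0 : MvPolynomial (Fin 2) R) • MvPolynomial.pderiv 0 +
    (3 * MvPolynomial.X 1 : MvPolynomial (Fin 2) R) • MvPolynomial.pderiv 1

/-- The vector field `9t ∂/∂s - 2s² ∂/∂t` on the parameters `s = X 0`, `t = X 1` of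
`y² = x³ + sx + t`, tangent to the level curves of the discriminant `4s³ + 27t²`. -/
noncomputable def discriminantField (R : Type*) [CommRing R] :
    Derivation R (MvPolynomial (Fin 2) R) (MvPolynomial (Fin 2) R) :=
  (9 * MvPolynomial.X 1 : MvPolynomial (Fin 2) R) • MvPolynomial.pderiv 0 -
    (2 * MvPolynomial.X 0 ^ 2 : MvPolynomial (Fin 2) R) • MvPolynomial.pderiv 1

variable {R : Type*} [CommRing R]

lemma eulerField_apply (g : MvPolynomial (Fin 2) R) :
    eulerField R g = 2 * MvPolynomial.X 0 * MvPolynomial.pderiv 0 g +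
      3 * MvPolynomial.X 1 * MvPolynomial.pderiv 1 g :=
  rfl

lemma discriminantField_apply (g : MvPolynomial (Fin 2) R) :
    discriminantField R g = 9 * MvPolynomial.X 1 * MvPolynomial.pderiv 0 g -
      2 * MvPolynomial.X 0 ^ 2 * MvPolynomial.pderiv 1 g :=
  rfl

lemma eulerField_X_zero :
    eulerField R (MvPolynomial.X 0) = 2 * MvPolynomial.X 0 := by
  simp [eulerField_apply]

lemma eulerField_X_one :
    eulerField R (MvPolynomial.X 1) = 3 * MvPolynomial.X 1 := by
  simp [eulerField_apply]

lemma discriminantField_X_zero :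
    discriminantField R (MvPolynomial.X 0) = 9 * MvPolynomial.X 1 := by
  simp [discriminantField_apply]

lemma discriminantField_X_one :
    discriminantField R (MvPolynomial.X 1) = -2 * MvPolynomial.X 0 ^ 2 := by
  simp [discriminantField_apply]

lemma dvd_discriminant_mul_pderiv {Q : MvPolynomial (Fin 2) R}
    (hE : Q ∣ eulerField R Q) (hL : Q ∣ discriminantField R Q) (i : Fin 2) :
    Q ∣ (4 * MvPolynomial.X 0 ^ 3 + 27 * MvPolynomial.X 1 ^ 2) * MvPolynomial.pderiv i Q := by
  rw [eulerField_apply] at hE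
  rw [discriminantField_apply] at hL
  fin_cases i
  · convert dvd_add (hL.mul_left (3 * MvPolynomial.X 1)) (hE.mul_left (2 * MvPolynomial.X 0 ^ 2))
      using 1
    dsimp only [Fin.zero_eta]
    ring
  · convert dvd_sub (hE.mul_left (9 * MvPolynomial.X 1)) (hL.mul_left (2 * MvPolynomial.X 0))
      using 1
    dsimp only [Fin.mk_one]
    ring

variable {K : Type*} [Field K] {p h : ℕ} [Fact p.Prime] [CharP K p]

lemma not_dvd_natCast_of_prime {R : Type*} [CommRing R] [CharP R p] {Q : R} (hQ : Prime Q) {m : ℕ}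
    (hm : 0 < m) (hmp : m < p) : ¬ Q ∣ (m : R) := fun hdvd ↦
  hQ.not_isUnit (isUnit_of_dvd_unit hdvd
    ((CharP.isUnit_natCast_iff Fact.out).mpr (Nat.not_dvd_of_pos_of_lt hm hmp)))

lemma hasseInvariant_X_ne_zero (hp : p = 2 * h + 1) (hh : 2 ≤ h) :
    hasseInvariant h (MvPolynomial.X 0 : MvPolynomial (Fin 2) K) (MvPolynomial.X 1) ≠ 0 := by
  have h3 : ((3 : ℕ) : K) ≠ 0 :=
    CharP.cast_ne_zero_of_ne_of_prime K (p := p) Nat.prime_three (by lia)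
  intro h₀
  have hval := map_hasseInvariant (a := (MvPolynomial.X 0 : MvPolynomial (Fin 2) K))
    (b := MvPolynomial.X 1) (MvPolynomial.eval ![-3 * 1 ^ 2, 2 * 1 ^ 3]) h
  simp only [h₀, map_zero, MvPolynomial.eval_X, Matrix.cons_val_zero, Matrix.cons_val_one,
    hasseInvariant_neg_three_mul_sq hp, mul_one] at hval
  exact pow_ne_zero h h3 (mod_cast hval.symm)

theorem dvd_discriminant_of_sq_dvd_hasseInvariant (hp : p = 2 * h + 1) (hh : 2 ≤ h)
    {Q : MvPolynomial (Fin 2) K} (hQ : Prime Q)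
    (hdvd : Q ^ 2 ∣ hasseInvariant h (MvPolynomial.X 0) (MvPolynomial.X 1)) :
    Q ∣ 4 * MvPolynomial.X 0 ^ 3 + 27 * MvPolynomial.X 1 ^ 2 := by
  have hA := hasseInvariant_X_ne_zero (K := K) hp hh
  have hfin := FiniteMultiplicity.of_prime_left hQ hA
  obtain ⟨B, hAB, hB⟩ := hfin.exists_eq_pow_mul_and_not_dvd
  obtain ⟨n, hn⟩ := Nat.exists_eq_add_of_le' (hfin.le_multiplicity_of_pow_dvd hdvd)
  rw [hn] at hAB
  have hQdeg : 0 < Q.totalDegree := totalDegree_pos_of_prime hQ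
  have hdeg : (n + 2) * Q.totalDegree ≤ h :=
    (mul_totalDegree_le_of_pow_dvd hA ⟨B, hAB⟩).trans
      (totalDegree_hasseInvariant_le (by simp) (by simp) h)
  have hn_lt : n + 2 < p := by nlinarith
  have hQ_lt : Q.totalDegree < p := by nlinarith
  have hE : Q ∣ eulerField K Q :=
    dvd_derivation_of_derivation_eq_mul hQ _ hAB hB (not_dvd_natCast_of_prime hQ (by lia) hn_lt)
      (euler_hasseInvariant eulerField_X_zero eulerField_X_one h)
  have hL : Q ∣ discriminantField K Q :=
    dvd_derivation_of_derivation_derivation_eq_mul hQ _ hAB hB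
      (mod_cast not_dvd_natCast_of_prime hQ (m := 4) (by lia) (by lia))
      (not_dvd_natCast_of_prime hQ (by lia) (by lia)) (not_dvd_natCast_of_prime hQ (by lia) hn_lt)
      (picardFuchs_hasseInvariant discriminantField_X_zero discriminantField_X_one hh
        (two_mul_natCast_add_one_eq_zero hp))
  by_contra hΔ
  refine hQdeg.ne' (totalDegree_eq_zero_of_pderiv_eq_zero hQ_lt fun i ↦ pderiv_eq_zero_of_dvd ?_)
  exact (hQ.dvd_or_dvd (dvd_discriminant_mul_pderiv hE hL i)).resolve_left hΔ

lemma not_dvd_X_one_of_dvd_X_zero {Q : MvPolynomial (Fin 2) K} (hQ : Prime Q)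
    (h₀ : Q ∣ MvPolynomial.X 0) : ¬ Q ∣ MvPolynomial.X 1 := by
  intro h₁
  have hassoc := hQ.associated_of_dvd MvPolynomial.X_prime h₀
  exact zero_ne_one (MvPolynomial.X_dvd_X.mp (hassoc.dvd_iff_dvd_left.mp h₁))

theorem not_dvd_hasseInvariant_of_dvd_discriminant (hp : p = 2 * h + 1) (hh : 2 ≤ h)
    {Q : MvPolynomial (Fin 2) K} (hQ : Prime Q)
    (hΔ : Q ∣ 4 * MvPolynomial.X 0 ^ 3 + 27 * MvPolynomial.X 1 ^ 2) :
    ¬ Q ∣ hasseInvariant h (MvPolynomial.X 0) (MvPolynomial.X 1) := by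
  have := (Ideal.span_singleton_prime hQ.ne_zero).mpr hQ
  let S := MvPolynomial (Fin 2) K ⧸ Ideal.span {Q}
  let F := FractionRing S
  let φ : MvPolynomial (Fin 2) K →+* F := (algebraMap S F).comp (Ideal.Quotient.mk _)
  have hφ (g : MvPolynomial (Fin 2) K) : φ g = 0 ↔ Q ∣ g := by
    rw [RingHom.comp_apply, FaithfulSMul.algebraMap_eq_zero_iff, Ideal.Quotient.eq_zero_iff_mem,
      Ideal.mem_span_singleton]
  have : CharP F p := charP_of_injective_ringHom (φ.comp MvPolynomial.C).injective p
  have h3 : ((3 : ℕ) : F) ≠ 0 :=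
    CharP.cast_ne_zero_of_ne_of_prime F (p := p) Nat.prime_three (by lia)
  have hΔφ := (hφ _).mpr hΔ
  simp only [map_add, map_mul, map_pow, map_ofNat] at hΔφ
  rw [← hφ, map_hasseInvariant]
  refine hasseInvariant_ne_zero_of_singular hp hh (fun hs ↦ ?_) hΔφ
  have ht : ((3 : ℕ) : F) ^ 3 * φ (MvPolynomial.X 1) ^ 2 = 0 := by
    rw [hs] at hΔφ
    push_cast
    linear_combination hΔφ
  have ht := eq_zero_of_pow_eq_zero ((mul_eq_zero.mp ht).resolve_left (pow_ne_zero 3 h3))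
  exact not_dvd_X_one_of_dvd_X_zero hQ ((hφ _).mp hs) ((hφ _).mp ht)

theorem squarefree_hasseInvariant (hp : p = 2 * h + 1) (hh : 2 ≤ h) :
    Squarefree (hasseInvariant h (MvPolynomial.X 0 : MvPolynomial (Fin 2) K)
      (MvPolynomial.X 1)) := by
  rw [squarefree_iff_irreducible_sq_not_dvd_of_ne_zero (hasseInvariant_X_ne_zero hp hh)]
  intro Q hQ hdvd
  rw [← sq] at hdvd
  exact not_dvd_hasseInvariant_of_dvd_discriminant hp hh hQ.prime
    (dvd_discriminant_of_sq_dvd_hasseInvariant hp hh hQ.prime hdvd)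
    ((dvd_pow_self Q two_ne_zero).trans hdvd)

end UniversalCubic

instance Wst_isShortNF (R : Type*) [CommRing R] : (Wst R).IsShortNF where
  a₁ := rfl
  a₂ := rfl
  a₃ := rfl

lemma natCast_dvd_of_map_castRingHom_eq_zero {σ : Type*} {p : ℕ} {f : MvPolynomial σ ℤ}
    (hf : MvPolynomial.map (Int.castRingHom (ZMod p)) f = 0) : (p : MvPolynomial σ ℤ) ∣ f := by
  rw [← map_natCast MvPolynomial.C, MvPolynomial.C_dvd_iff_dvd_coeff]
  intro m
  rw [← ZMod.intCast_zmod_eq_zero_iff_dvd, ← eq_intCast (Int.castRingHom _),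
    ← MvPolynomial.coeff_map, hf, MvPolynomial.coeff_zero]

/-- The leading coefficient `a_{(p-1)/2}` of `θ_{s,t}` is squarefree in `K[s,t]`: no square of
a prime of `K[s,t]` divides it. -/
theorem theta_leadingCoeff_squarefree (p : ℕ) (hp : p.Prime) (hp5 : 5 ≤ p)
    (K : Type*) [Field K] [CharP K p]
    (θ : Polynomial (MvPolynomial (Fin 2) (ZMod p)))
    (hθ : θ.comp (Polynomial.X ^ p) =
      ((Wst ℤ).preΨ (p : ℤ)).map (MvPolynomial.map (Int.castRingHom (ZMod p)))) :
    ∀ Q : MvPolynomial (Fin 2) K, Prime Q →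
      Q ∣ MvPolynomial.map (ZMod.castHom (dvd_refl p) K) (θ.coeff ((p - 1) / 2)) →
      ¬ (Q ^ 2 ∣ MvPolynomial.map (ZMod.castHom (dvd_refl p) K) (θ.coeff ((p - 1) / 2))) := by
  have : Fact p.Prime := ⟨hp⟩
  have hodd : Odd p := hp.odd_of_ne_two (by lia)
  obtain ⟨h, hh⟩ := id hodd
  rw [preΨ_ofNat] at hθ
  have hθ₀ : θ ≠ 0 := by
    rintro rfl
    exact preΨ'_Wst_map_ne_zero hodd (by rw [← hθ, zero_comp])
  have hcoeff : MvPolynomial.map (ZMod.castHom (dvd_refl p) K) (θ.coeff ((p - 1) / 2)) =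
      hasseInvariant h (MvPolynomial.X 0) (MvPolynomial.X 1) := by
    rw [show (p - 1) / 2 = h by lia, coeff_eq_hasseInvariant (Wst ℤ) hh
      (fun _ ↦ natCast_dvd_of_map_castRingHom_eq_zero) hθ₀ hθ, map_hasseInvariant]
    simp only [Wst, MvPolynomial.map_X]
  intro Q hQ _ hdvd
  rw [hcoeff, sq] at hdvd
  exact hQ.not_isUnit (squarefree_hasseInvariant hh (by lia) Q hdvd)
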